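/- Let k be an algebraically closed field of characteristic different from 2 and t ≥ 2. Then the monomorphism category S(mod k[X]/(X^t)) is of finite representation type if and only if t ≤ 5. (This is the case n = 1 of the paper's Corollary 7.8 on the connected self-injective Nakayama algebras Λ(n,t) = kC_n/J^t, since Λ(1,t) ≅ k[X]/(X^t).) -/

import Mathlib

open CategoryTheory CategoryTheory.Limits

/-- The componentwise direct sum of two objects of the morphism category. -/
noncomputable def arrowBiprod {C : Type*} [Category C] [Preadditive C]
    [HasBinaryBiproducts C] (f g : Arrow C) : Arrow C :=
  Arrow.mk (biprod.map f.hom g.hom)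

/-- Indecomposability of an object of the subcategory of the morphism category given by
the predicate `P`. -/
noncomputable def IndecArrowIn {C : Type*} [Category C] [Preadditive C]
    [HasBinaryBiproducts C] (P : Arrow C → Prop) (X : Arrow C) : Prop :=
  ¬ IsZero X ∧ ∀ Y Z : Arrow C, P Y → P Z →
    Nonempty (X ≅ arrowBiprod Y Z) → IsZero Y ∨ IsZero Z

/-- The subcategory given by `P` has finite representation type. -/
noncomputable def FRTArrow {C : Type*} [Category C] [Preadditive C]
    [HasBinaryBiproducts C] (P : Arrow C → Prop) : Prop :=
  ∃ s : Set (Arrow C), s.Finite ∧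
    ∀ X, P X → IndecArrowIn P X → ∃ Y ∈ s, Nonempty (X ≅ Y)

/-- Objects of the monomorphism category `S(mod Λ)`: injective homomorphisms between
finitely generated (equivalently, finite dimensional) `Λ`-modules. -/
def SModObj' (Λ : Type) [CommRing Λ] (X : Arrow (ModuleCat Λ)) : Prop :=
  Module.Finite Λ X.left ∧ Module.Finite Λ X.right ∧ Mono X.hom

/-!
Over `k[X]/(X^t)` an object of the monomorphism category is a pair consisting of a vector space `V`
with an operator `T`, `T ^ t = 0`, and a `T`-invariant subspace `U`.

Suppose `T ^ 5 = 0`. The spaces `U ∩ im Tⁱ` and `Tⁱ U` measure the heights of the elements of `U`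
in `V` and in `U`, and the quotients `Q i = (U ∩ im Tⁱ) / Tⁱ U`, `1 ≤ i ≤ 4`, form a representation
of the preprojective algebra of type `A₄`. Every homomorphism of these representations lifts to one
of pairs. A representation with `Q 2` or `Q 3` nonzero is governed by a `ℤ/2`-graded space with an
odd operator and two subspaces, one with `Q 2 = Q 3 = 0` by the spaces `Q 1` and `Q 4`, and a pair
with `Q = 0` is built from intervals. In each case one of finitely many combinatorial types occurs,
and two objects of the same type have homomorphisms `X ⟶ Y ⟶ X` whose composite is not nilpotent;
by Fitting's lemma indecomposable objects of the same type are isomorphic.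

For `t ≥ 6` the submodules generated by `X²x + Xy + z` and `X²y + c • Xz` of
`k[X]/(X⁶) ⊕ k[X]/(X⁴) ⊕ k[X]/(X²)` are pairwise non-isomorphic, while finite representation type
allows only finitely many isomorphism classes of any given length.
-/

namespace MonomorphismCategory

universe u v w

section Linking

variable {C D : Type*} [Category C] [Category D] [HasZeroMorphisms C] [HasZeroMorphisms D]

/-- Two objects are linked if some composite `X ⟶ Y ⟶ X` is not nilpotent. Linked indecomposable
objects of finite length are isomorphic, by Fitting's lemma. -/
def Linked (X Y : C) : Prop :=
  ∃ (f : X ⟶ Y) (g : Y ⟶ X), ∀ n : ℕ, (End.of (f ≫ g) ^ n).asHom ≠ 0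

/-- The objects satisfying `P` are covered by finitely many classes of pairwise linked objects. -/
def FinitelyLinked (P : C → Prop) : Prop :=
  ∃ (τ : Type) (_ : Finite τ) (R : τ → C → Prop),
    (∀ X, P X → ∃ t, R t X) ∧ ∀ t X Y, R t X → R t Y → Linked X Y

theorem FinitelyLinked.mono {P Q : C → Prop} (hQ : FinitelyLinked Q) (h : ∀ X, P X → Q X) :
    FinitelyLinked P := by
  obtain ⟨τ, hτ, R, hR, hlink⟩ := hQ
  exact ⟨τ, hτ, R, fun X hX => hR X (h X hX), hlink⟩

theorem FinitelyLinked.or {P Q : C → Prop} (hP : FinitelyLinked P) (hQ : FinitelyLinked Q) :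
    FinitelyLinked fun X => P X ∨ Q X := by
  obtain ⟨τ, _, R, hR, hlink⟩ := hP
  obtain ⟨τ', _, R', hR', hlink'⟩ := hQ
  refine ⟨τ ⊕ τ', inferInstance, Sum.elim R R', fun X hX => ?_, ?_⟩
  · rcases hX with hX | hX
    · obtain ⟨t, ht⟩ := hR X hX
      exact ⟨.inl t, ht⟩
    · obtain ⟨t, ht⟩ := hR' X hX
      exact ⟨.inr t, ht⟩
  · rintro (t | t) X Y
    exacts [hlink t X Y, hlink' t X Y]

theorem Linked.of_map {F : C ⥤ D} [F.PreservesZeroMorphisms] {X Y : C}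
    (hXY : Function.Surjective (F.map : (X ⟶ Y) → _))
    (hYX : Function.Surjective (F.map : (Y ⟶ X) → _)) (h : Linked (F.obj X) (F.obj Y)) :
    Linked X Y := by
  obtain ⟨f, g, hfg⟩ := h
  obtain ⟨f, rfl⟩ := hXY f
  obtain ⟨g, rfl⟩ := hYX g
  refine ⟨f, g, fun n hn => hfg n ?_⟩
  have hpow := (F.mapEnd X).map_pow (End.of (f ≫ g)) n
  have hmap : F.mapEnd X (End.of (f ≫ g)) = End.of (F.map f ≫ F.map g) := F.map_comp f g
  rw [hmap] at hpow
  exact hpow.symm.trans ((congrArg F.map hn).trans (F.map_zero _ _))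

theorem FinitelyLinked.of_full (F : C ⥤ D) [F.PreservesZeroMorphisms] {P : C → Prop}
    {Q : D → Prop} (hfull : ∀ X Y, P X → P Y → Function.Surjective (F.map : (X ⟶ Y) → _))
    (hPQ : ∀ X, P X → Q (F.obj X)) (hQ : FinitelyLinked Q) : FinitelyLinked P := by
  obtain ⟨τ, hτ, R, hR, hlink⟩ := hQ
  refine ⟨τ, hτ, fun t X => P X ∧ R t (F.obj X), fun X hX => ?_, ?_⟩
  · obtain ⟨t, ht⟩ := hR _ (hPQ X hX)
    exact ⟨t, hX, ht⟩
  · rintro t X Y ⟨hX, htX⟩ ⟨hY, htY⟩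
    exact (hlink t _ _ htX htY).of_map (hfull X Y hX hY) (hfull Y X hY hX)

theorem Linked.of_fixed {k : Type v} [Field k] (F : C ⥤ ModuleCat.{u} k)
    [F.PreservesZeroMorphisms] {X Y : C} (f : X ⟶ Y) (g : Y ⟶ X) {x : F.obj X} (hx : x ≠ 0)
    (hfix : F.map g (F.map f x) = x) : Linked X Y := by
  have hpow : ∀ n : ℕ, F.map (End.of (f ≫ g) ^ n).asHom x = x := by
    intro n
    induction n with
    | zero => exact congrArg (fun h => h.hom x) (F.map_id X)
    | succ n ih =>
      have hcomp : F.map (End.of (f ≫ g) ^ (n + 1)).asHom =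
          (F.map f ≫ F.map g) ≫ F.map (End.of (f ≫ g) ^ n).asHom := by
        rw [← F.map_comp, ← F.map_comp, pow_succ]; rfl
      have happly : F.map (End.of (f ≫ g) ^ (n + 1)).asHom x =
          F.map (End.of (f ≫ g) ^ n).asHom (F.map g (F.map f x)) := by rw [hcomp]; rfl
      rw [happly, hfix, ih]
  refine ⟨f, g, fun n hn => hx ?_⟩
  have hzero := hpow n
  rw [hn, F.map_zero] at hzero
  exact hzero.symm

theorem finitelyLinked_moduleCat (k : Type v) [Field k] :
    FinitelyLinked fun V : ModuleCat.{u} k => Nontrivial V := by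
  refine ⟨Unit, inferInstance, fun _ V => Nontrivial V, fun V hV => ⟨(), hV⟩, fun _ V W hV hW => ?_⟩
  obtain ⟨x, hx⟩ := exists_ne (0 : V)
  obtain ⟨y, hy⟩ := exists_ne (0 : W)
  obtain ⟨l, hl⟩ := Module.Projective.exists_dual_eq_one k hx
  obtain ⟨m, hm⟩ := Module.Projective.exists_dual_eq_one k hy
  refine Linked.of_fixed (𝟭 _) (ModuleCat.ofHom (l.smulRight y)) (ModuleCat.ofHom (m.smulRight x))
    hx ?_
  simp [hl, hm]

end Linking

section Frobenius

variable {k : Type*} [Field k] {V W : Type*} [AddCommGroup V] [Module k V] [AddCommGroup W]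
  [Module k W]

/-- If `l` kills the image of `T ^ (m + 1)` and `S ^ (m + 1)` kills `y`, this is the homomorphism
of `k[X]`-modules `(V, T) → (W, S)` corresponding to `l` under the self-duality of
`k[X] / (X ^ (m + 1))`. -/
def frobenius (m : ℕ) (l : Module.Dual k V) (T : Module.End k V) (S : Module.End k W) (y : W) :
    V →ₗ[k] W :=
  ∑ j ∈ Finset.range (m + 1), (l ∘ₗ T ^ (m - j)).smulRight ((S ^ j) y)

theorem frobenius_apply (m : ℕ) (l : Module.Dual k V) (T : Module.End k V) (S : Module.End k W)
    (y : W) (u : V) :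
    frobenius m l T S y u = ∑ j ∈ Finset.range (m + 1), l ((T ^ (m - j)) u) • (S ^ j) y := by
  simp [frobenius]

theorem frobenius_comm {m : ℕ} {l : Module.Dual k V} {T : Module.End k V} {S : Module.End k W}
    {y : W} (hl : ∀ u, l ((T ^ (m + 1)) u) = 0) (hy : (S ^ (m + 1)) y = 0) (u : V) :
    frobenius m l T S y (T u) = S (frobenius m l T S y u) := by
  have hT : ∀ i u, (T ^ i) (T u) = (T ^ (i + 1)) u := fun i u => by
    rw [pow_succ, Module.End.mul_apply]
  have hS : ∀ i, S ((S ^ i) y) = (S ^ (i + 1)) y := fun i => by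
    rw [pow_succ', Module.End.mul_apply]
  rw [frobenius_apply, frobenius_apply, map_sum, Finset.sum_range_succ', Finset.sum_range_succ]
  simp only [map_smul, hT, hS, hy, smul_zero, add_zero, Nat.sub_zero, hl, zero_smul]
  refine Finset.sum_congr rfl fun j hj => ?_
  have hlt := Finset.mem_range.1 hj
  rw [show m - (j + 1) + 1 = m - j by omega]

theorem frobenius_pow {m : ℕ} {l : Module.Dual k V} {T : Module.End k V} {S : Module.End k W}
    {x : V} {y : W} (hx : (T ^ (m + 1)) x = 0) :
    frobenius m l T S y ((T ^ m) x) = l ((T ^ m) x) • (S ^ m) y := by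
  rw [frobenius_apply, Finset.sum_range_succ, Nat.sub_self, pow_zero, Module.End.one_apply]
  refine add_eq_right.2 (Finset.sum_eq_zero fun j hj => ?_)
  have hle : m + 1 ≤ m - j + m := by have := Finset.mem_range.1 hj; omega
  rw [← Module.End.mul_apply, ← pow_add, Module.End.pow_map_zero_of_le hle hx, map_zero, zero_smul]

end Frobenius

section Homogeneous

/-- The eigenvalue of a grading idempotent on vectors of degree `d` modulo `2`. -/
def parity (k : Type*) [Field k] (d : ℕ) : k := (d % 2 : ℕ)

variable {k : Type*} [Field k]

theorem parity_succ (d : ℕ) : parity k (d + 1) = 1 - parity k d := by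
  rcases Nat.mod_two_eq_zero_or_one d with h | h
  · simp [parity, h, Nat.add_mod]
  · simp [parity, h, Nat.add_mod]

variable {V : Type*} [AddCommGroup V] [Module k V] {e : Module.End k V}

theorem exists_homogeneous (he : ∀ u, e (e u) = e u) {S N : Submodule k V}
    (hS : S ∈ e.invtSubmodule) (hSN : ¬ S ≤ N) :
    ∃ d : Fin 2, ∃ x ∈ S, x ∉ N ∧ e x = parity k d • x := by
  obtain ⟨z, hzS, hzN⟩ := SetLike.not_le_iff_exists.1 hSN
  by_cases hez : e z ∈ N
  · exact ⟨0, z - e z, S.sub_mem hzS (hS hzS), fun h => hzN ((N.sub_mem_iff_left hez).1 h),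
      by simp [he, parity]⟩
  · exact ⟨1, e z, hS hzS, hez, by simp [he, parity]⟩

theorem exists_homogeneous_dual (he : ∀ u, e (e u) = e u) {S : Submodule k V}
    (hS : S ∈ e.invtSubmodule) {x : V} (hxS : x ∉ S) {d : ℕ} (hx : e x = parity k d • x) :
    ∃ l : Module.Dual k V, l x = 1 ∧ (∀ u ∈ S, l u = 0) ∧ ∀ u, l (e u) = parity k d * l u := by
  obtain ⟨l, hlx, hlS⟩ := Submodule.exists_le_ker_of_notMem hxS
  have hl : ∀ u ∈ S, l u = 0 := fun u hu => hlS hu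
  rcases Nat.mod_two_eq_zero_or_one d with hd | hd
  · refine ⟨(l x)⁻¹ • (l - l ∘ₗ e), ?_, fun u hu => ?_, fun u => ?_⟩
    · simp [hx, parity, hd, hlx]
    · simp [hl u hu, hl _ (hS hu)]
    · simp [he, parity, hd]
  · refine ⟨(l x)⁻¹ • (l ∘ₗ e), ?_, fun u hu => ?_, fun u => ?_⟩
    · simp [hx, parity, hd, hlx]
    · simp [hl _ (hS hu)]
    · simp [he, parity, hd]

end Homogeneous

/-- A `ℤ/2`-graded vector space with an odd operator `T` and `n` homogeneous subspaces. The grading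
is encoded by the projection `e` onto the odd part, so that `T` is odd when `T e + e T = T`. -/
structure OddSpace (k : Type v) [Field k] (n : ℕ) where
  V : Type u
  [addCommGroup : AddCommGroup V]
  [module : Module k V]
  T : Module.End k V
  e : Module.End k V
  sub : Fin n → Submodule k V
  e_e : ∀ u, e (e u) = e u
  T_e_add_e_T : ∀ u, T (e u) + e (T u) = T u
  sub_mem : ∀ i, sub i ∈ e.invtSubmodule

namespace OddSpace

attribute [instance] addCommGroup module

variable {k : Type v} [Field k] {n : ℕ}

/-- Linear maps compatible with the operators and the subspaces. -/
@[ext]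
structure Hom (X Y : OddSpace k n) where
  toLin : X.V →ₗ[k] Y.V
  map_T : ∀ u, toLin (X.T u) = Y.T (toLin u)
  map_e : ∀ u, toLin (X.e u) = Y.e (toLin u)
  map_mem : ∀ i, ∀ u ∈ X.sub i, toLin u ∈ Y.sub i

instance : Category (OddSpace k n) where
  Hom := Hom
  id X := ⟨LinearMap.id, fun _ => rfl, fun _ => rfl, fun _ _ hu => hu⟩
  comp f g := ⟨g.toLin ∘ₗ f.toLin, fun u => by simp [f.map_T, g.map_T],
    fun u => by simp [f.map_e, g.map_e], fun i u hu => g.map_mem i _ (f.map_mem i u hu)⟩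

instance : HasZeroMorphisms (OddSpace k n) where
  zero X Y := ⟨⟨0, fun u => by simp, fun u => by simp, fun i u _ => (Y.sub i).zero_mem⟩⟩
  comp_zero _ _ := Hom.ext (LinearMap.zero_comp _)
  zero_comp _ _ _ f := Hom.ext (LinearMap.comp_zero f.toLin)

/-- The functor forgetting the operators and the subspaces. -/
def forget (k : Type v) [Field k] (n : ℕ) : OddSpace k n ⥤ ModuleCat.{u} k where
  obj X := ModuleCat.of k X.V
  map f := ModuleCat.ofHom f.toLin

instance : (forget k n).PreservesZeroMorphisms := ⟨fun _ _ => rfl⟩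

theorem e_T (X : OddSpace k n) (u : X.V) : X.e (X.T u) = X.T u - X.T (X.e u) :=
  eq_sub_of_add_eq' (X.T_e_add_e_T u)

theorem T_e (X : OddSpace k n) (u : X.V) : X.T (X.e u) = X.T u - X.e (X.T u) :=
  eq_sub_of_add_eq (X.T_e_add_e_T u)

theorem e_pow_T {X : OddSpace k n} {x : X.V} {d : ℕ} (hx : X.e x = parity k d • x) (j : ℕ) :
    X.e ((X.T ^ j) x) = parity k (d + j) • (X.T ^ j) x := by
  induction j with
  | zero => exact hx
  | succ j ih =>
    rw [pow_succ', Module.End.mul_apply, e_T, ih, ← add_assoc, parity_succ, sub_smul, one_smul,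
      map_smul]

theorem dual_pow_T_e {X : OddSpace k n} {l : Module.Dual k X.V} {d : ℕ}
    (hl : ∀ u, l (X.e u) = parity k d * l u) (j : ℕ) (u : X.V) :
    l ((X.T ^ j) (X.e u)) = parity k (d + j) * l ((X.T ^ j) u) := by
  induction j generalizing u with
  | zero => exact hl u
  | succ j ih =>
    rw [pow_succ, Module.End.mul_apply, Module.End.mul_apply, T_e, map_sub, map_sub, ih,
      ← add_assoc, parity_succ, sub_mul, one_mul]

/-- The data of a string `x, T x, …, T ^ m x` of homogeneous vectors, `x` of degree `d`, that is
dual to a homogeneous functional `l`. The subspace `i` contains `T ^ j x` when `A i j` holds, and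
is orthogonal to the dual string there otherwise. -/
def HasString (m d : ℕ) (A : Fin n → Fin (m + 1) → Prop) (X : OddSpace k n) : Prop :=
  ∃ (x : X.V) (l : Module.Dual k X.V), l ((X.T ^ m) x) = 1 ∧
    (X.T ^ (m + 1)) x = 0 ∧ (∀ u, l ((X.T ^ (m + 1)) u) = 0) ∧
    X.e x = parity k d • x ∧ (∀ u, l (X.e u) = parity k (d + m) * l u) ∧
    (∀ i j, A i j → (X.T ^ (j : ℕ)) x ∈ X.sub i) ∧
    ∀ i j, ¬ A i j → ∀ u ∈ X.sub i, l ((X.T ^ (m - j : ℕ)) u) = 0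

/-- The morphism of a string of `X` onto a string of `Y` given by the Frobenius form. -/
def frobeniusHom {m d : ℕ} {A : Fin n → Fin (m + 1) → Prop} {X Y : OddSpace k n}
    {l : Module.Dual k X.V} {y : Y.V}
    (hl : ∀ u, l ((X.T ^ (m + 1)) u) = 0) (hy : (Y.T ^ (m + 1)) y = 0)
    (hle : ∀ u, l (X.e u) = parity k (d + m) * l u) (hye : Y.e y = parity k d • y)
    (hX : ∀ i j, ¬ A i j → ∀ u ∈ X.sub i, l ((X.T ^ (m - j : ℕ)) u) = 0)
    (hY : ∀ i j, A i j → (Y.T ^ (j : ℕ)) y ∈ Y.sub i) : X ⟶ Y where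
  toLin := frobenius m l X.T Y.T y
  map_T := frobenius_comm hl hy
  map_e u := by
    rw [frobenius_apply, frobenius_apply, map_sum]
    refine Finset.sum_congr rfl fun j hj => ?_
    have hmod : (d + m + (m - j)) % 2 = (d + j) % 2 := by have := Finset.mem_range.1 hj; omega
    rw [map_smul, e_pow_T hye, dual_pow_T_e hle, smul_smul, mul_comm, parity, parity, hmod]
  map_mem i u hu := by
    rw [frobenius_apply]
    refine Submodule.sum_mem _ fun j hj => ?_
    by_cases hA : A i ⟨j, Finset.mem_range.1 hj⟩
    · exact Submodule.smul_mem _ _ (hY i _ hA)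
    · rw [hX i _ hA u hu, zero_smul]
      exact Submodule.zero_mem _

theorem HasString.linked {m d : ℕ} {A : Fin n → Fin (m + 1) → Prop} {X Y : OddSpace k n}
    (hX : HasString m d A X) (hY : HasString m d A Y) : Linked X Y := by
  obtain ⟨x, l, hlx, hx, hl, hxe, hle, hxA, hlA⟩ := hX
  obtain ⟨y, l', hly, hy, hl', hye, hle', hyA, hlA'⟩ := hY
  refine Linked.of_fixed (forget k n) (frobeniusHom hl hy hle hye hlA hyA)
    (frobeniusHom hl' hx hle' hxe hlA' hxA) (x := (X.T ^ m) x) ?_ ?_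
  · rintro h
    exact one_ne_zero (hlx.symm.trans ((congrArg l h).trans l.map_zero))
  · change frobenius m l' Y.T X.T x (frobenius m l X.T Y.T y ((X.T ^ m) x)) = (X.T ^ m) x
    rw [frobenius_pow hx, hlx, one_smul, frobenius_pow hy, hly, one_smul]

theorem finitelyLinked_hasString (k : Type v) [Field k] (n m : ℕ) :
    FinitelyLinked fun X : OddSpace k n => ∃ (d : Fin 2) (A : _), HasString m d A X :=
  ⟨Fin 2 × (Fin n → Fin (m + 1) → Prop), inferInstance, fun t => HasString m t.1 t.2,
    fun _ ⟨d, A, h⟩ => ⟨(d, A), h⟩, fun _ _ _ => HasString.linked⟩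

theorem exists_hasString {m d : ℕ} {X : OddSpace k n} {x : X.V} (hxe : X.e x = parity k d • x)
    (hx : (X.T ^ (m + 1)) x = 0) {S : Submodule k X.V} (hSe : S ∈ X.e.invtSubmodule)
    (hS : ∀ u, (X.T ^ (m + 1)) u ∈ S) (hxS : (X.T ^ m) x ∉ S)
    (hsub : ∀ i, ∀ j ≤ m, (X.T ^ j) x ∈ X.sub i ∨ ∀ u ∈ X.sub i, (X.T ^ (m - j)) u ∈ S) :
    ∃ A, HasString m d A X := by
  obtain ⟨l, hlx, hlS, hle⟩ := exists_homogeneous_dual X.e_e hSe hxS (e_pow_T hxe m)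
  refine ⟨fun i j => (X.T ^ (j : ℕ)) x ∈ X.sub i, x, l, hlx, hx, fun u => hlS _ (hS u), hxe, hle,
    fun i j h => h, fun i j h u hu => hlS _ ?_⟩
  exact (hsub i j (Nat.lt_succ_iff.1 j.2)).resolve_left h u hu

end OddSpace

section Projection

variable {k : Type*} [Field k] {V : Type*} [AddCommGroup V] [Module k V] {P Q I K : Submodule k V}

theorem eq_bot_of_le_comap_projection (hc : IsCompl P Q) (hP : P ⊓ K = ⊥) (hQ : Q ⊓ I = ⊥)
    (h : I ≤ K.comap (P.projection Q hc)) : I = ⊥ := by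
  refine (Submodule.eq_bot_iff _).2 fun z hz => ?_
  have hpz : P.projection Q hc z = 0 :=
    (Submodule.eq_bot_iff _).1 hP _ ⟨Submodule.projection_apply_mem hc z, h hz⟩
  exact (Submodule.eq_bot_iff _).1 hQ z ⟨(Submodule.projection_apply_eq_zero_iff hc).1 hpz, hz⟩

theorem inf_eq_bot_of_le_sup (hc : IsCompl P Q) (hI : I ⊓ K.comap (P.projection Q hc) = ⊥)
    (h : P ⊓ K ≤ Q ⊔ I) : P ⊓ K = ⊥ := by
  refine (Submodule.eq_bot_iff _).2 fun x hx => ?_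
  obtain ⟨y, hy, i, hi, rfl⟩ := Submodule.mem_sup.1 (h hx)
  have hpi : P.projection Q hc i = y + i := by
    have hpx := Submodule.projection_apply_of_mem_left hc hx.1
    rwa [map_add, (Submodule.projection_apply_eq_zero_iff hc).2 hy, zero_add] at hpx
  have hzero : i = 0 := (Submodule.eq_bot_iff _).1 hI i ⟨hi, by
    change P.projection Q hc i ∈ K
    rw [hpi]
    exact hx.2⟩
  rw [← hpi, hzero, map_zero]

end Projection

namespace OddSpace

variable {k : Type v} [Field k] {n : ℕ}

/-- The configuration of the subspaces `Φ i` of `M`, with zero operator and concentrated in degree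
`d`, is a retract of `X` as far as the vector `w` is concerned. -/
def HasRetract {M : Type*} [AddCommGroup M] [Module k M] (Φ : Fin n → Submodule k M) (w : M)
    (d : ℕ) (X : OddSpace k n) : Prop :=
  ∃ (s : M →ₗ[k] X.V) (r : X.V →ₗ[k] M), r (s w) = w ∧
    (∀ a, X.T (s a) = 0) ∧ (∀ u, r (X.T u) = 0) ∧
    (∀ a, X.e (s a) = parity k d • s a) ∧ (∀ u, r (X.e u) = parity k d • r u) ∧
    (∀ i, ∀ a ∈ Φ i, s a ∈ X.sub i) ∧ ∀ i, ∀ u ∈ X.sub i, r u ∈ Φ i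

theorem HasRetract.linked {M : Type*} [AddCommGroup M] [Module k M] {Φ : Fin n → Submodule k M}
    {w : M} (hw : w ≠ 0) {d : ℕ} {X Y : OddSpace k n} (hX : HasRetract Φ w d X)
    (hY : HasRetract Φ w d Y) : Linked X Y := by
  obtain ⟨s, r, hw₁, hsT, hrT, hse, hre, hs, hr⟩ := hX
  obtain ⟨s', r', hw₂, hsT', hrT', hse', hre', hs', hr'⟩ := hY
  let f : X ⟶ Y := ⟨s' ∘ₗ r, fun u => by simp [hrT, hsT'], fun u => by simp [hre, hse'],
    fun i u hu => hs' i _ (hr i u hu)⟩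
  let g : Y ⟶ X := ⟨s ∘ₗ r', fun u => by simp [hrT', hsT], fun u => by simp [hre', hse],
    fun i u hu => hs i _ (hr' i u hu)⟩
  refine Linked.of_fixed (forget k n) f g (x := s w) (fun h => hw ?_) ?_
  · rw [← hw₁, show s w = 0 from h, map_zero]
  · change s (r' (s' (r (s w)))) = s w
    rw [hw₁, hw₂]

/-- Two homogeneous subspaces spanning the kernel of `T` and meeting in the image of `T`, together
with a flag of length two. -/
structure IsDoubleFlag (X : OddSpace k 4) : Prop where
  nontrivial : Nontrivial X.V
  T_T : ∀ u, X.T (X.T u) = 0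
  inf_eq : X.sub 0 ⊓ X.sub 1 = LinearMap.range X.T
  sup_eq : X.sub 0 ⊔ X.sub 1 = LinearMap.ker X.T
  le : X.sub 2 ≤ X.sub 3

variable {X : OddSpace k 4}

namespace IsDoubleFlag

theorem exists_jump (hX : IsDoubleFlag X) {P : Submodule k X.V → Prop} (hbot : ¬ P ⊥)
    (htop : P ⊤) : ∃ S ∈ X.e.invtSubmodule, ∃ A ∈ X.e.invtSubmodule, ¬ P S ∧ P A ∧
      (A ≤ X.sub 2 ∨ X.sub 2 ≤ S) ∧ (A ≤ X.sub 3 ∨ X.sub 3 ≤ S) := by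
  by_cases h2 : P (X.sub 2)
  · exact ⟨⊥, Module.End.invtSubmodule.bot_mem _, _, X.sub_mem 2, hbot, h2, .inl le_rfl,
      .inl hX.le⟩
  by_cases h3 : P (X.sub 3)
  · exact ⟨_, X.sub_mem 2, _, X.sub_mem 3, h2, h3, .inr le_rfl, .inl le_rfl⟩
  · exact ⟨_, X.sub_mem 3, ⊤, Module.End.invtSubmodule.top_mem _, h3, htop, .inr hX.le,
      .inr le_rfl⟩

theorem exists_hasString (hX : IsDoubleFlag X) (hT : X.T ≠ 0) :
    ∃ (d : Fin 2) (A : _), HasString 1 d A X := by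
  have htop : ¬ ⊤ ≤ LinearMap.ker X.T := fun h => hT (LinearMap.ker_eq_top.1 (top_le_iff.1 h))
  obtain ⟨R, -, A, hAe, hR, hA, hA2, hA3⟩ :=
    hX.exists_jump (P := fun A => ¬ A ≤ LinearMap.ker X.T) (not_not.2 bot_le) htop
  obtain ⟨S, hSe, B, hBe, hS, hB, hB2, hB3⟩ := hX.exists_jump
    (P := fun B => ¬ A ⊓ B.comap X.T ≤ LinearMap.ker X.T)
    (not_not.2 fun u hu => hu.2) (by simpa using hA)
  rw [not_not] at hR hS
  have hcomap : B.comap X.T ∈ X.e.invtSubmodule := fun u hu => by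
    change X.T (X.e u) ∈ B
    rw [T_e]
    exact B.sub_mem hu (hBe hu)
  obtain ⟨d, x, hx, hTx, hxe⟩ :=
    exists_homogeneous X.e_e (Module.End.invtSubmodule.inf_mem hAe hcomap) hB
  have hTT : ∀ u, (X.T ^ (1 + 1)) u = 0 := fun u => by
    rw [pow_succ, Module.End.mul_apply, pow_one, hX.T_T]
  have hrange : X.T x ∈ X.sub 0 ⊓ X.sub 1 := hX.inf_eq.ge ⟨x, rfl⟩
  have hflag : ∀ i, A ≤ X.sub i ∨ X.sub i ≤ R → B ≤ X.sub i ∨ X.sub i ≤ S → ∀ j ≤ 1,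
      (X.T ^ j) x ∈ X.sub i ∨ ∀ u ∈ X.sub i, (X.T ^ (1 - j)) u ∈ S := by
    intro i hAi hBi j hj
    interval_cases j
    · exact hAi.imp (fun h => h hx.1) fun h u hu => by
        rw [Nat.sub_zero, pow_one, show X.T u = 0 from hR (h hu)]; exact S.zero_mem
    · exact hBi.imp (fun h => by rw [pow_one]; exact h hx.2) fun h u hu => h hu
  have hker : ∀ i, X.sub i ≤ LinearMap.ker X.T → X.T x ∈ X.sub i → ∀ j ≤ 1,
      (X.T ^ j) x ∈ X.sub i ∨ ∀ u ∈ X.sub i, (X.T ^ (1 - j)) u ∈ S := by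
    intro i hi hxi j hj
    interval_cases j
    · exact .inr fun u hu => by
        rw [Nat.sub_zero, pow_one, show X.T u = 0 from hi hu]; exact S.zero_mem
    · exact .inl (by rwa [pow_one])
  refine ⟨d, OddSpace.exists_hasString hxe (hTT x) hSe (fun u => by rw [hTT]; exact S.zero_mem)
    (fun h => hTx (hS ⟨hx.1, by rwa [pow_one] at h⟩)) fun i => ?_⟩
  match i with
  | 0 => exact hker 0 (le_sup_left.trans hX.sup_eq.le) hrange.1
  | 1 => exact hker 1 (le_sup_right.trans hX.sup_eq.le) hrange.2
  | 2 => exact hflag 2 hA2 hB2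
  | 3 => exact hflag 3 hA3 hB3

end IsDoubleFlag

theorem le_of_forall_not_hasString {X : OddSpace k n} (hT : X.T = 0)
    (h : ∀ (d : Fin 2) A, ¬ HasString 0 d A X) {A S : Submodule k X.V} (hA : A ∈ X.e.invtSubmodule)
    (hS : S ∈ X.e.invtSubmodule) (hsub : ∀ i, A ≤ X.sub i ∨ X.sub i ≤ S) : A ≤ S := by
  by_contra hAS
  obtain ⟨d, x, hxA, hxS, hxe⟩ := exists_homogeneous X.e_e hA hAS
  obtain ⟨B, hB⟩ := OddSpace.exists_hasString (m := 0) hxe (by simp [hT]) hS (by simp [hT])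
    hxS fun i j hj => by
      obtain rfl := Nat.le_zero.1 hj
      exact (hsub i).imp (fun h => h hxA) fun h u hu => h hu
  exact h d B hB

/-- The possible traces of a subspace on the plane `k × k` in which the coordinate axes are fixed:
zero, the diagonal, everything. -/
def planeTrace (k : Type*) [Field k] : Fin 3 → Submodule k (k × k) :=
  ![⊥, LinearMap.eqLocus (LinearMap.fst k k k) (LinearMap.snd k k k), ⊤]

/-- The plane `k × k` with its coordinate axes and two more subspaces. -/
def plane (k : Type*) [Field k] (t : Fin 3 × Fin 3) : Fin 4 → Submodule k (k × k) :=
  ![Submodule.prod ⊤ ⊥, Submodule.prod ⊥ ⊤, planeTrace k t.1, planeTrace k t.2]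

/-- The plane `k × k` of type `t` in degree `d` is a retract of `X`. -/
def HasPlane (d : Fin 2) (t : Fin 3 × Fin 3) (X : OddSpace k 4) : Prop :=
  HasRetract (plane k t) (1, 0) d X

theorem finitelyLinked_hasPlane (k : Type v) [Field k] :
    FinitelyLinked fun X : OddSpace k 4 => ∃ d t, HasPlane d t X :=
  ⟨Fin 2 × (Fin 3 × Fin 3), inferInstance, fun s => HasPlane s.1 s.2,
    fun _ ⟨d, t, h⟩ => ⟨(d, t), h⟩, fun _ _ _ => HasRetract.linked (by simp)⟩

/-- The subspace `A` meets the plane with axes spanned by `x` and `z - x` in the trace of type `t`;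
in the diagonal case this is tested by a functional vanishing on `S`. -/
inductive IsTrace {V : Type*} [AddCommGroup V] [Module k V] (x z : V) (S A : Submodule k V) :
    Fin 3 → Prop
  | bot : A = ⊥ → IsTrace x z S A 0
  | diag : z ∈ A → A ≤ S → IsTrace x z S A 1
  | top : x ∈ A → z ∈ A → IsTrace x z S A 2

theorem IsTrace.section_mem {V : Type*} [AddCommGroup V] [Module k V] {x z : V}
    {S A : Submodule k V} {t : Fin 3} (h : IsTrace x z S A t) {a : k × k}
    (ha : a ∈ planeTrace k t) : a.1 • x + a.2 • (z - x) ∈ A := by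
  cases h with
  | bot h =>
    obtain rfl : a = 0 := ha
    simp
  | diag h _ =>
    obtain ha : a.1 = a.2 := ha
    rw [ha, ← smul_add, add_sub_cancel]
    exact A.smul_mem _ h
  | top hx hz => exact A.add_mem (A.smul_mem _ hx) (A.smul_mem _ (A.sub_mem hz hx))

theorem IsTrace.retraction_mem {V : Type*} [AddCommGroup V] [Module k V] {x z : V}
    {S A : Submodule k V} {t : Fin 3} (h : IsTrace x z S A t) {r : V →ₗ[k] k × k}
    (hr : ∀ u ∈ S, (r u).1 = (r u).2) {u : V} (hu : u ∈ A) : r u ∈ planeTrace k t := by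
  cases h with
  | bot h =>
    obtain rfl : u = 0 := by rwa [h] at hu
    simp
  | diag _ h => exact hr u (h hu)
  | top => exact Submodule.mem_top

theorem projection_e (hc : IsCompl (X.sub 0) (X.sub 1)) (u : X.V) :
    (X.sub 0).projection _ hc (X.e u) = X.e ((X.sub 0).projection _ hc u) := by
  conv_lhs => rw [← Submodule.projection_add_projection_eq_self hc u]
  rw [map_add, map_add,
    Submodule.projection_apply_of_mem_left hc (X.sub_mem 0 (Submodule.projection_apply_mem hc u)),
    (Submodule.projection_apply_eq_zero_iff hc).2
      (X.sub_mem 1 (Submodule.projection_apply_mem hc.symm u)), add_zero]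

theorem le_comap_of_forall_not_hasPlane (hT : X.T = 0) (h : ∀ d t, ¬ HasPlane d t X)
    (hc : IsCompl (X.sub 0) (X.sub 1)) {A S : Submodule k X.V} (hA : A ∈ X.e.invtSubmodule)
    (hS : S ∈ X.e.invtSubmodule) {t : Fin 3 × Fin 3}
    (h2 : ∀ z ∈ A, IsTrace ((X.sub 0).projection _ hc z) z S (X.sub 2) t.1)
    (h3 : ∀ z ∈ A, IsTrace ((X.sub 0).projection _ hc z) z S (X.sub 3) t.2) :
    A ≤ S.comap ((X.sub 0).projection _ hc) := by
  by_contra hAS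
  obtain ⟨d, z, hzA, hzS, hze⟩ := exists_homogeneous X.e_e hA hAS
  set p := (X.sub 0).projection _ hc
  have hpe : ∀ u, p (X.e u) = X.e (p u) := projection_e hc
  have hxe : X.e (p z) = parity k d • p z := by rw [← hpe, hze, map_smul]
  obtain ⟨l, hlz, hlS, hle⟩ := exists_homogeneous_dual X.e_e hS hzS hxe
  have hp0 : ∀ u ∈ X.sub 0, p u = u := fun u => Submodule.projection_apply_of_mem_left hc
  have hp1 : ∀ u ∈ X.sub 1, p u = 0 := fun u => (Submodule.projection_apply_eq_zero_iff hc).2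
  have hx : p z ∈ X.sub 0 := Submodule.projection_apply_mem hc z
  have hy : z - p z ∈ X.sub 1 := Submodule.sub_projection_mem hc z
  let s : k × k →ₗ[k] X.V :=
    (LinearMap.fst k k k).smulRight (p z) + (LinearMap.snd k k k).smulRight (z - p z)
  let r : X.V →ₗ[k] k × k := (l ∘ₗ p).prod (l ∘ₗ p - l)
  have hr : ∀ u ∈ S, (r u).1 = (r u).2 := fun u hu => by simp [r, hlS u hu]
  refine h d t ⟨s, r, ?_, fun a => by simp [hT], fun u => by simp [hT], fun a => ?_, fun u => ?_,
    fun i a ha => ?_, fun i u hu => ?_⟩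
  · simp [s, r, hp0 _ hx, hlz]
  · simp [s, hxe, hze, smul_comm (parity k _), smul_sub]
  · simp [r, hpe, hle, mul_sub]
  · match i with
    | 0 =>
      obtain ⟨-, ha : a.2 = 0⟩ := ha
      simpa [s, ha] using (X.sub 0).smul_mem a.1 hx
    | 1 =>
      obtain ⟨ha : a.1 = 0, -⟩ := ha
      simpa [s, ha] using (X.sub 1).smul_mem a.2 hy
    | 2 => exact (h2 z hzA).section_mem ha
    | 3 => exact (h3 z hzA).section_mem ha
  · match i with
    | 0 => exact ⟨trivial, by simp [r, hp0 u hu]⟩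
    | 1 => exact ⟨by simp [r, hp1 u hu], trivial⟩
    | 2 => exact (h2 z hzA).retraction_mem hr hu
    | 3 => exact (h3 z hzA).retraction_mem hr hu

namespace IsDoubleFlag

theorem isCompl (hX : IsDoubleFlag X) (hT : X.T = 0) : IsCompl (X.sub 0) (X.sub 1) where
  disjoint := disjoint_iff.2 (hX.inf_eq.trans (LinearMap.range_eq_bot.2 hT))
  codisjoint := codisjoint_iff.2 (hX.sup_eq.trans (LinearMap.ker_eq_top.2 hT))

theorem inf_comap_projection_eq_bot (hX : IsDoubleFlag X) (hT : X.T = 0)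
    (hstring : ∀ (d : Fin 2) A, ¬ HasString 0 d A X) (hplane : ∀ d t, ¬ HasPlane d t X)
    (hc : IsCompl (X.sub 0) (X.sub 1)) :
    X.sub 2 ⊓ (X.sub 3).comap ((X.sub 0).projection _ hc) = ⊥ ∧ X.sub 0 ⊓ X.sub 2 = ⊥ ∧
      X.sub 1 ⊓ X.sub 2 = ⊥ := by
  have hinf : ∀ i, X.sub i ⊓ X.sub 2 ∈ X.e.invtSubmodule := fun i =>
    Module.End.invtSubmodule.inf_mem (X.sub_mem i) (X.sub_mem 2)
  have h0 : X.sub 0 ⊓ X.sub 2 = ⊥ := (hc.disjoint.mono_left inf_le_left).eq_bot_of_le <|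
    le_of_forall_not_hasString hT hstring (hinf 0) (X.sub_mem 1) fun
      | 0 => .inl inf_le_left
      | 1 => .inr le_rfl
      | 2 => .inl inf_le_right
      | 3 => .inl (inf_le_right.trans hX.le)
  have h1 : X.sub 1 ⊓ X.sub 2 = ⊥ := (hc.symm.disjoint.mono_left inf_le_left).eq_bot_of_le <|
    le_of_forall_not_hasString hT hstring (hinf 1) (X.sub_mem 0) fun
      | 0 => .inr le_rfl
      | 1 => .inl inf_le_left
      | 2 => .inl inf_le_right
      | 3 => .inl (inf_le_right.trans hX.le)
  have hcomap : (X.sub 3).comap ((X.sub 0).projection _ hc) ∈ X.e.invtSubmodule := fun u hu => by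
    change (X.sub 0).projection _ hc (X.e u) ∈ X.sub 3
    rw [projection_e]
    exact X.sub_mem 3 hu
  refine ⟨?_, h0, h1⟩
  refine eq_bot_of_le_comap_projection hc h0 (eq_bot_mono (inf_le_inf_left _ inf_le_left) h1) ?_
  exact le_comap_of_forall_not_hasPlane (t := (1, 2)) hT hplane hc
    (Module.End.invtSubmodule.inf_mem (X.sub_mem 2) hcomap) (X.sub_mem 2)
    (fun z hz => .diag hz.1 le_rfl) (fun z hz => .top hz.2 (hX.le hz.1))

theorem sub_three_eq_bot (hX : IsDoubleFlag X) (hT : X.T = 0)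
    (hstring : ∀ (d : Fin 2) A, ¬ HasString 0 d A X) (hplane : ∀ d t, ¬ HasPlane d t X) :
    X.sub 3 = ⊥ := by
  have hc := hX.isCompl hT
  obtain ⟨hcomap, -, h12⟩ := hX.inf_comap_projection_eq_bot hT hstring hplane hc
  have hinf : ∀ i, X.sub i ⊓ X.sub 3 ∈ X.e.invtSubmodule := fun i =>
    Module.End.invtSubmodule.inf_mem (X.sub_mem i) (X.sub_mem 3)
  have hsup : ∀ i, X.sub i ⊔ X.sub 2 ∈ X.e.invtSubmodule := fun i =>
    Module.End.invtSubmodule.sup_mem (X.sub_mem i) (X.sub_mem 2)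
  have h03 : X.sub 0 ⊓ X.sub 3 = ⊥ := inf_eq_bot_of_le_sup hc hcomap <|
    le_of_forall_not_hasString hT hstring (hinf 0) (hsup 1) fun
      | 0 => .inl inf_le_left
      | 1 => .inr le_sup_left
      | 2 => .inr le_sup_right
      | 3 => .inl inf_le_right
  have hcomap' : X.sub 2 ⊓ (X.sub 3).comap ((X.sub 1).projection _ hc.symm) = ⊥ := by
    refine (Submodule.eq_bot_iff _).2 fun z hz => (Submodule.eq_bot_iff _).1 hcomap z ⟨hz.1, ?_⟩
    change (X.sub 0).projection _ hc z ∈ X.sub 3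
    rw [Submodule.projection_eq_self_sub_projection hc.symm]
    exact (X.sub 3).sub_mem (hX.le hz.1) hz.2
  have h13 : X.sub 1 ⊓ X.sub 3 = ⊥ := inf_eq_bot_of_le_sup hc.symm hcomap' <|
    le_of_forall_not_hasString hT hstring (hinf 1) (hsup 0) fun
      | 0 => .inr le_sup_left
      | 1 => .inl inf_le_left
      | 2 => .inr le_sup_right
      | 3 => .inl inf_le_right
  have h2 : X.sub 2 = ⊥ := eq_bot_of_le_comap_projection hc h03 h12 <|
    le_comap_of_forall_not_hasPlane (t := (1, 1)) hT hplane hc (X.sub_mem 2) (X.sub_mem 3)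
      (fun z hz => .diag hz hX.le) (fun z hz => .diag (hX.le hz) le_rfl)
  exact eq_bot_of_le_comap_projection hc h03 h13 <|
    le_comap_of_forall_not_hasPlane (t := (0, 1)) hT hplane hc (X.sub_mem 3) (X.sub_mem 3)
      (fun z _ => .bot h2) (fun z hz => .diag hz le_rfl)

theorem exists_hasString_or_hasPlane (hX : IsDoubleFlag X) (hT : X.T = 0) :
    (∃ (d : Fin 2) (A : _), HasString 0 d A X) ∨ ∃ d t, HasPlane d t X := by
  by_contra! hno
  obtain ⟨hstring, hplane⟩ := hno
  have hc := hX.isCompl hT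
  have h3 : X.sub 3 = ⊥ := hX.sub_three_eq_bot hT hstring hplane
  have h2 : X.sub 2 = ⊥ := eq_bot_mono hX.le h3
  have h01 : X.sub 0 ≤ X.sub 1 :=
    le_of_forall_not_hasString hT hstring (X.sub_mem 0) (X.sub_mem 1) fun
      | 0 => .inl le_rfl
      | 1 => .inr le_rfl
      | 2 => .inr (h2.trans_le bot_le)
      | 3 => .inr (h3.trans_le bot_le)
  have h10 : X.sub 1 ≤ X.sub 0 :=
    le_of_forall_not_hasString hT hstring (X.sub_mem 1) (X.sub_mem 0) fun
      | 0 => .inr le_rfl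
      | 1 => .inl le_rfl
      | 2 => .inr (h2.trans_le bot_le)
      | 3 => .inr (h3.trans_le bot_le)
  have htop : (⊤ : Submodule k X.V) = ⊥ := by
    rw [← hc.sup_eq_top, sup_eq_right.2 h01, ← inf_eq_right.2 h10, hc.inf_eq_bot]
  have := hX.nontrivial
  exact top_ne_bot htop

end IsDoubleFlag

theorem finitelyLinked_isDoubleFlag (k : Type v) [Field k] :
    FinitelyLinked (IsDoubleFlag : OddSpace k 4 → Prop) := by
  refine (((finitelyLinked_hasString k 4 0).or (finitelyLinked_hasPlane k)).or
    (finitelyLinked_hasString k 4 1)).mono fun X hX => ?_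
  by_cases hT : X.T = 0
  · exact .inl (hX.exists_hasString_or_hasPlane hT)
  · exact .inr (hX.exists_hasString hT)

end OddSpace

section Jordan

open Polynomial DirectSum Module

variable {k : Type*} {V V' : Type*} [Field k] [AddCommGroup V] [Module k V] [AddCommGroup V']
  [Module k V']

theorem map_pow_apply_of_comm {T : End k V} {T' : End k V'} {ψ : V →ₗ[k] V'}
    (h : ∀ u, ψ (T u) = T' (ψ u)) (n : ℕ) (u : V) : ψ ((T ^ n) u) = (T' ^ n) (ψ u) := by
  induction n generalizing u with
  | zero => rfl
  | succ n ih => rw [pow_succ, pow_succ, End.mul_apply, End.mul_apply, ih, h]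

theorem exists_aeval'_equiv_directSum [FiniteDimensional k V] {T : End k V} (hT : IsNilpotent T) :
    ∃ (d : ℕ) (n : Fin d → ℕ),
      Nonempty (AEval' T ≃ₗ[k[X]] ⨁ j, k[X] ⧸ k[X] ∙ (X : k[X]) ^ n j) := by
  obtain ⟨N, hN⟩ := hT
  refine torsion_by_prime_power_decomposition irreducible_X fun {x} => ⟨⟨_, N, rfl⟩, ?_⟩
  obtain ⟨u, rfl⟩ := (AEval'.of T).surjective x
  change (X : k[X]) ^ N • AEval'.of T u = 0
  rw [AEval'.X_pow_smul_of, hN, zero_smul, map_zero]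

theorem aeval_mem_of_pow_dvd {T : End k V} {T' : End k V'} {n N : ℕ} {w : V} {w' : V'}
    {Γ : Submodule k (V × V')} (hw : (T ^ n) w = 0) (hw' : (T' ^ n) w' = 0)
    (hΓ : ∀ a, a < n → n ≤ a + N → ((T ^ a) w, (T' ^ a) w') ∈ Γ) {p : k[X]}
    (hp : X ^ n ∣ X ^ N * p) : (aeval T p w, aeval T' p w') ∈ Γ := by
  have hsum : (aeval T p w, aeval T' p w') =
      ∑ a ∈ Finset.range (p.natDegree + 1), p.coeff a • ((T ^ a) w, (T' ^ a) w') := by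
    simp [Prod.ext_iff, aeval_eq_sum_range, LinearMap.sum_apply, Prod.fst_sum, Prod.snd_sum]
  rw [hsum]
  refine Submodule.sum_mem _ fun a _ => ?_
  by_cases han : a < n
  · by_cases haN : n ≤ a + N
    · exact Γ.smul_mem _ (hΓ a han haN)
    · have hcoeff := X_pow_dvd_iff.1 hp (a + N) (not_le.1 haN)
      rw [coeff_X_pow_mul] at hcoeff
      rw [hcoeff, zero_smul]
      exact Γ.zero_mem
  · rw [Module.End.pow_map_zero_of_le (not_lt.1 han) hw,
      Module.End.pow_map_zero_of_le (not_lt.1 han) hw', ← Prod.zero_eq_mk, smul_zero]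
    exact Γ.zero_mem

theorem X_pow_smul_of_eq_zero {T : End k V} {n : ℕ} {w : V} :
    (X : k[X]) ^ n • AEval'.of T w = 0 ↔ (T ^ n) w = 0 := by
  rw [AEval'.X_pow_smul_of, LinearEquiv.map_eq_zero_iff]; rfl

section Decomposition

variable {T : End k V} {d : ℕ} {n : Fin d → ℕ} {w : Fin d → V}

theorem exists_sum_aeval_of_pow_apply_eq_zero
    {E : AEval' T ≃ₗ[k[X]] ⨁ j, k[X] ⧸ k[X] ∙ (X : k[X]) ^ n j}
    (hE : ∀ j p, E.symm (lof k[X] _ _ j (Submodule.Quotient.mk p)) = p • AEval'.of T (w j))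
    {N : ℕ} {u : V} (hu : (T ^ N) u = 0) :
    ∃ p : Fin d → k[X], (∀ j, X ^ n j ∣ X ^ N * p j) ∧ u = ∑ j, aeval T (p j) (w j) := by
  choose p hp using fun j => Submodule.Quotient.mk_surjective _ (E (AEval'.of T u) j)
  refine ⟨p, fun j => ?_, (AEval'.of T).injective ?_⟩
  · rw [← X_pow_smul_of_eq_zero, ← E.map_eq_zero_iff, map_smul] at hu
    have hj := DFunLike.congr_fun hu j
    rw [DirectSum.smul_apply, ← hp, ← Submodule.Quotient.mk_smul, DirectSum.zero_apply,
      Submodule.Quotient.mk_eq_zero, Submodule.mem_span_singleton] at hj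
    obtain ⟨q, hq⟩ := hj
    exact ⟨q, hq.symm.trans (mul_comm q _)⟩
  · rw [map_sum]
    refine E.injective ?_
    rw [map_sum, ← sum_univ_of (E (AEval'.of T u))]
    refine Finset.sum_congr rfl fun j _ => E.symm.injective ?_
    rw [E.symm_apply_apply, ← hp]
    exact hE j (p j)

theorem exists_comm_map_aeval_eq {E : AEval' T ≃ₗ[k[X]] ⨁ j, k[X] ⧸ k[X] ∙ (X : k[X]) ^ n j}
    (hE : ∀ j p, E.symm (lof k[X] _ _ j (Submodule.Quotient.mk p)) = p • AEval'.of T (w j))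
    {T' : End k V'} {w' : Fin d → V'} (hw' : ∀ j, (T' ^ n j) (w' j) = 0) :
    ∃ ψ : V →ₗ[k] V', (∀ u, ψ (T u) = T' (ψ u)) ∧
      ∀ j (p : k[X]), ψ (aeval T p (w j)) = aeval T' p (w' j) := by
  let Ψ : AEval' T →ₗ[k[X]] AEval' T' := toModule k[X] (Fin d) _ (fun j =>
    Submodule.liftQSpanSingleton (X ^ n j)
      (LinearMap.toSpanSingleton k[X] _ (AEval'.of T' (w' j)))
      ((LinearMap.toSpanSingleton_apply ..).trans (X_pow_smul_of_eq_zero.2 (hw' j)))) ∘ₗ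
    E.toLinearMap
  refine ⟨(AEval'.of T').symm.toLinearMap ∘ₗ Ψ.restrictScalars k ∘ₗ (AEval'.of T).toLinearMap,
    fun u => ?_, fun j p => congrArg (AEval'.of T').symm ?_⟩
  · change (AEval'.of T').symm (Ψ (AEval'.of T (T u))) = _
    rw [← AEval'.X_smul_of, map_smul, AEval'.of_symm_X_smul]; rfl
  · change Ψ (p • AEval'.of T (w j)) = p • AEval'.of T' (w' j)
    rw [← hE, LinearMap.comp_apply, LinearEquiv.coe_coe, E.apply_symm_apply, toModule_lof]
    rfl

end Decomposition

/-- Generators `w j` of Jordan strings: linear maps commuting with the operators may be prescribed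
on them, and the kernel of a power of `T` is spanned by ends of the strings. -/
theorem exists_jordan_generators [FiniteDimensional k V] {T : End k V} (hT : IsNilpotent T) :
    ∃ (d : ℕ) (n : Fin d → ℕ) (w : Fin d → V), (∀ j, (T ^ n j) (w j) = 0) ∧
      (∀ N u, (T ^ N) u = 0 →
        ∃ p : Fin d → k[X], (∀ j, X ^ n j ∣ X ^ N * p j) ∧ u = ∑ j, aeval T (p j) (w j)) ∧
      ∀ (V' : Type u) [AddCommGroup V'] [Module k V'] (T' : End k V') (w' : Fin d → V'),
        (∀ j, (T' ^ n j) (w' j) = 0) → ∃ ψ : V →ₗ[k] V', (∀ u, ψ (T u) = T' (ψ u)) ∧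
          ∀ j (p : k[X]), ψ (aeval T p (w j)) = aeval T' p (w' j) := by
  obtain ⟨d, n, ⟨E⟩⟩ := exists_aeval'_equiv_directSum hT
  let w (j : Fin d) : V := (AEval'.of T).symm (E.symm (lof k[X] _ _ j (Submodule.Quotient.mk 1)))
  have hE (j : Fin d) (p : k[X]) :
      E.symm (lof k[X] _ _ j (Submodule.Quotient.mk p)) = p • AEval'.of T (w j) := by
    rw [LinearEquiv.apply_symm_apply, ← map_smul, ← map_smul, ← Submodule.Quotient.mk_smul,
      smul_eq_mul, mul_one]
  refine ⟨d, n, w, fun j => ?_, fun N u => exists_sum_aeval_of_pow_apply_eq_zero hE,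
    fun V' _ _ T' w' => exists_comm_map_aeval_eq hE⟩
  rw [← X_pow_smul_of_eq_zero, ← hE,
    (Submodule.Quotient.mk_eq_zero _).2 (Submodule.mem_span_singleton_self _), map_zero, map_zero]

theorem exists_comm_lift [FiniteDimensional k V] {T : End k V} {T' : End k V'}
    (hT : IsNilpotent T) {ι : Type*} (N : ι → ℕ) (Γ : ι → Submodule k (V × V'))
    (h : ∀ n w, (T ^ n) w = 0 → ∃ w', (T' ^ n) w' = 0 ∧
      ∀ i a, a < n → n ≤ a + N i → ((T ^ a) w, (T' ^ a) w') ∈ Γ i) :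
    ∃ ψ : V →ₗ[k] V', (∀ u, ψ (T u) = T' (ψ u)) ∧
      ∀ i u, (T ^ N i) u = 0 → (u, ψ u) ∈ Γ i := by
  obtain ⟨d, n, w, hw, hspan, hlift⟩ := exists_jordan_generators hT
  choose w' hw' hΓ using fun j => h (n j) (w j) (hw j)
  obtain ⟨ψ, hcomm, hψ⟩ := hlift V' T' w' hw'
  refine ⟨ψ, hcomm, fun i u hu => ?_⟩
  obtain ⟨p, hp, rfl⟩ := hspan (N i) u hu
  change ∑ j, aeval T (p j) (w j) ∈ (Γ i).comap (LinearMap.id.prod ψ)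
  refine Submodule.sum_mem _ fun j _ => ?_
  change (_, ψ _) ∈ Γ i
  rw [hψ]
  exact aeval_mem_of_pow_dvd (hw j) (hw' j) (hΓ j i) (hp j)

end Jordan

section Subquotient

variable {k : Type v} {V V' : Type u} [Field k] [AddCommGroup V] [Module k V] [AddCommGroup V']
  [Module k V']

/-- The subquotient `S / (S ∩ B)` of a vector space. -/
abbrev Subquotient (S B : Submodule k V) : Type u := S ⧸ B.comap S.subtype

namespace Subquotient

variable {S B A : Submodule k V} {S' B' A' : Submodule k V'}

theorem mk_eq_zero {u : S} : ((B.comap S.subtype).mkQ u : Subquotient S B) = 0 ↔ (u : V) ∈ B :=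
  Submodule.Quotient.mk_eq_zero _

theorem mk_eq_mk {u v : S} :
    ((B.comap S.subtype).mkQ u : Subquotient S B) = (B.comap S.subtype).mkQ v ↔ (u - v : V) ∈ B :=
  Submodule.Quotient.eq _

theorem subsingleton_iff : Subsingleton (Subquotient S B) ↔ S ≤ B :=
  Submodule.Quotient.subsingleton_iff.trans Submodule.comap_subtype_eq_top

/-- The linear map of subquotients induced by a linear map. -/
def map (f : V →ₗ[k] V') (hS : S ≤ S'.comap f) (hB : B ≤ B'.comap f) :
    Subquotient S B →ₗ[k] Subquotient S' B' :=
  Submodule.mapQ _ _ (f.restrict hS) fun _ hu => hB hu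

/-- The subspace of a subquotient induced by a subspace. -/
def sub (S B A : Submodule k V) : Submodule k (Subquotient S B) :=
  (A.comap S.subtype).map (Submodule.mkQ _)

theorem mk_mem_sub (hB : B ≤ A) {u : S} :
    ((B.comap S.subtype).mkQ u : Subquotient S B) ∈ sub S B A ↔ (u : V) ∈ A := by
  refine ⟨?_, fun hu => ⟨u, hu, rfl⟩⟩
  rintro ⟨v, hv, h⟩
  simpa using A.sub_mem hv (hB (mk_eq_mk.1 h))

theorem map_mem_sub {f : V →ₗ[k] V'} {hS : S ≤ S'.comap f} {hB : B ≤ B'.comap f}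
    (hA : A ≤ A'.comap f) : sub S B A ≤ (sub S' B' A').comap (map f hS hB) := by
  rintro _ ⟨u, hu, rfl⟩
  exact ⟨⟨f u, hS u.2⟩, hA hu, rfl⟩

/-- The linear relation between the ambient spaces given by a linear map of subquotients. -/
def rel (φ : Subquotient S B →ₗ[k] Subquotient S' B') : Submodule k (V × V') :=
  (LinearMap.ker (φ ∘ₗ (B.comap S.subtype).mkQ ∘ₗ LinearMap.fst k S S' -
    (B'.comap S'.subtype).mkQ ∘ₗ LinearMap.snd k S S')).map (S.subtype.prodMap S'.subtype)

variable {φ : Subquotient S B →ₗ[k] Subquotient S' B'} {u : V} {u' : V'}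

theorem mem_rel : (u, u') ∈ rel φ ↔ ∃ (hu : u ∈ S) (hu' : u' ∈ S'),
    φ ((B.comap S.subtype).mkQ ⟨u, hu⟩) = (B'.comap S'.subtype).mkQ ⟨u', hu'⟩ := by
  constructor
  · rintro ⟨⟨v, v'⟩, h, hv⟩
    obtain ⟨rfl, rfl⟩ := Prod.ext_iff.1 hv
    exact ⟨v.2, v'.2, sub_eq_zero.1 h⟩
  · rintro ⟨hu, hu', h⟩
    exact ⟨(⟨u, hu⟩, ⟨u', hu'⟩), sub_eq_zero.2 h, rfl⟩

theorem mem_rel_of_mem (hu : u ∈ S) (hu' : u' ∈ S') (h : u ∈ B) (h' : u' ∈ B') :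
    (u, u') ∈ rel φ :=
  mem_rel.2 ⟨hu, hu', by rw [mk_eq_zero.2 h, mk_eq_zero.2 h', map_zero]⟩

theorem mem_of_mem_rel (h : (u, u') ∈ rel φ) (hu : u ∈ B) : u' ∈ B' := by
  obtain ⟨hS, hS', h⟩ := mem_rel.1 h
  rw [mk_eq_zero.2 hu, map_zero] at h
  exact mk_eq_zero.1 h.symm

theorem exists_mem_rel (φ : Subquotient S B →ₗ[k] Subquotient S' B') (hu : u ∈ S) :
    ∃ u', (u, u') ∈ rel φ := by
  obtain ⟨u', hu'⟩ := Submodule.mkQ_surjective _ (φ (Submodule.mkQ _ ⟨u, hu⟩))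
  exact ⟨u', mem_rel.2 ⟨hu, u'.2, hu'.symm⟩⟩

theorem exists_mem_rel_of_mem_sub (h : sub S B A ≤ (sub S' B' A').comap φ) (hu : u ∈ S)
    (hA : u ∈ A) : ∃ u' ∈ A', (u, u') ∈ rel φ := by
  obtain ⟨u', hA', hu'⟩ := h ⟨⟨u, hu⟩, hA, rfl⟩
  exact ⟨u', hA', mem_rel.2 ⟨hu, u'.2, hu'.symm⟩⟩

theorem mem_of_mem_rel_of_sub_le (h : sub S B A ≤ (sub S' B' A').comap φ) (hB : B' ≤ A')
    (hu : (u, u') ∈ rel φ) (hA : u ∈ A) : u' ∈ A' := by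
  obtain ⟨hS, hS', e⟩ := mem_rel.1 hu
  have hφ : φ ((B.comap S.subtype).mkQ ⟨u, hS⟩) ∈ sub S' B' A' := h ⟨⟨u, hS⟩, hA, rfl⟩
  rw [e] at hφ
  exact (mk_mem_sub hB).1 hφ

theorem apply_mem_rel {W W' : Type u} [AddCommGroup W] [Module k W] [AddCommGroup W'] [Module k W']
    {P D : Submodule k W} {P' D' : Submodule k W'} {χ : Subquotient P D →ₗ[k] Subquotient P' D'}
    {f : V →ₗ[k] W} {f' : V' →ₗ[k] W'} {hS : S ≤ P.comap f} {hS' : S' ≤ P'.comap f'}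
    (hB : B ≤ D.comap f) (hB' : B' ≤ D'.comap f')
    (h : ∀ q, χ (map f hS hB q) = map f' hS' hB' (φ q)) (hu : (u, u') ∈ rel φ) :
    (f u, f' u') ∈ rel χ := by
  obtain ⟨hu, hu', e⟩ := mem_rel.1 hu
  refine mem_rel.2 ⟨hS hu, hS' hu', ?_⟩
  exact (h _).trans (congrArg (map f' hS' hB') e)

theorem map_eq_of_mem_rel {f : V →ₗ[k] V'} {hS : S ≤ S'.comap f} (hB : B ≤ B'.comap f)
    (h : ∀ u ∈ S, (u, f u) ∈ rel φ) : map f hS hB = φ := by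
  refine LinearMap.ext fun q => ?_
  obtain ⟨u, rfl⟩ := Submodule.mkQ_surjective _ q
  obtain ⟨_, _, hu⟩ := mem_rel.1 (h u u.2)
  exact hu.symm

end Subquotient

end Subquotient

namespace OddSpace

open LinearMap

variable {k : Type v} [Field k] {n : ℕ}

theorem sq_T_e (X : OddSpace k n) (u : X.V) : (X.T ^ 2) (X.e u) = X.e ((X.T ^ 2) u) := by
  change X.T (X.T (X.e u)) = X.e (X.T (X.T u))
  rw [T_e, map_sub, T_e, sub_sub_cancel]

theorem ker_mem_invtSubmodule (X : OddSpace k n) : ker X.T ∈ X.e.invtSubmodule := fun u hu => by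
  change X.T (X.e u) = 0
  rw [T_e, mem_ker.1 hu, map_zero, sub_zero]

theorem range_mem_invtSubmodule (X : OddSpace k n) : range X.T ∈ X.e.invtSubmodule := by
  rintro _ ⟨u, rfl⟩
  exact ⟨u - X.e u, by rw [map_sub, e_T]⟩

theorem ker_sq_mem_invtSubmodule (X : OddSpace k n) : ker (X.T ^ 2) ∈ X.e.invtSubmodule :=
  fun u hu => by
    change (X.T ^ 2) (X.e u) = 0
    rw [sq_T_e, mem_ker.1 hu, map_zero]

theorem range_sq_mem_invtSubmodule (X : OddSpace k n) : range (X.T ^ 2) ∈ X.e.invtSubmodule := by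
  rintro _ ⟨u, rfl⟩
  exact ⟨X.e u, sq_T_e X u⟩

theorem ker_sq_le_comap_T (X : OddSpace k n) : ker (X.T ^ 2) ≤ (ker (X.T ^ 2)).comap X.T :=
  fun _ hu => (congrArg X.T hu).trans (map_zero _)

theorem range_sq_le_comap_T (X : OddSpace k n) : range (X.T ^ 2) ≤ (range (X.T ^ 2)).comap X.T := by
  rintro _ ⟨u, rfl⟩
  exact ⟨X.T u, rfl⟩

theorem range_sq_le_range (X : OddSpace k n) : range (X.T ^ 2) ≤ range X.T := by
  rintro _ ⟨u, rfl⟩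
  exact ⟨X.T u, rfl⟩

theorem range_sq_le_ker {X : OddSpace k n} (hT : X.T ^ 3 = 0) : range (X.T ^ 2) ≤ ker X.T := by
  rintro _ ⟨u, rfl⟩
  exact LinearMap.congr_fun hT u

theorem Hom.map_ker_sq {X Y : OddSpace k n} (f : Hom X Y) :
    ker (X.T ^ 2) ≤ (ker (Y.T ^ 2)).comap f.toLin := fun u hu => by
  change (Y.T ^ 2) (f.toLin u) = 0
  rw [← map_pow_apply_of_comm f.map_T, mem_ker.1 hu, map_zero]

theorem Hom.map_range_sq {X Y : OddSpace k n} (f : Hom X Y) :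
    range (X.T ^ 2) ≤ (range (Y.T ^ 2)).comap f.toLin := by
  rintro _ ⟨u, rfl⟩
  exact ⟨f.toLin u, (map_pow_apply_of_comm f.map_T 2 u).symm⟩

/-- The homology `ker T² / (im T² ∩ ker T²)`, with the four subspaces induced by `im T`, `ker T` and
the two given subspaces. -/
def homologyObj (X : OddSpace k 2) : OddSpace k 4 where
  V := Subquotient (ker (X.T ^ 2)) (range (X.T ^ 2))
  T := Subquotient.map X.T X.ker_sq_le_comap_T X.range_sq_le_comap_T
  e := Subquotient.map X.e X.ker_sq_mem_invtSubmodule X.range_sq_mem_invtSubmodule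
  sub := ![Subquotient.sub _ _ (range X.T), Subquotient.sub _ _ (ker X.T),
    Subquotient.sub _ _ (X.sub 0), Subquotient.sub _ _ (X.sub 1)]
  e_e q := by
    obtain ⟨u, rfl⟩ := Submodule.mkQ_surjective _ q
    exact congrArg (Submodule.mkQ _) (Subtype.ext (X.e_e u))
  T_e_add_e_T q := by
    obtain ⟨u, rfl⟩ := Submodule.mkQ_surjective _ q
    exact congrArg (Submodule.mkQ _) (Subtype.ext (X.T_e_add_e_T u))
  sub_mem
    | 0 => Subquotient.map_mem_sub X.range_mem_invtSubmodule
    | 1 => Subquotient.map_mem_sub X.ker_mem_invtSubmodule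
    | 2 => Subquotient.map_mem_sub (X.sub_mem 0)
    | 3 => Subquotient.map_mem_sub (X.sub_mem 1)

/-- The functor `X ↦ ker T² / (im T² ∩ ker T²)`; it is full on flags with `T ^ 3 = 0`. -/
def homology (k : Type v) [Field k] : OddSpace k 2 ⥤ OddSpace k 4 where
  obj := homologyObj
  map {X Y} f :=
    { toLin := Subquotient.map f.toLin (Hom.map_ker_sq f) (Hom.map_range_sq f)
      map_T := fun q => by
        obtain ⟨u, rfl⟩ := Submodule.mkQ_surjective _ q
        exact congrArg (Submodule.mkQ _) (Subtype.ext (f.map_T u))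
      map_e := fun q => by
        obtain ⟨u, rfl⟩ := Submodule.mkQ_surjective _ q
        exact congrArg (Submodule.mkQ _) (Subtype.ext (f.map_e u))
      map_mem := fun
        | 0 => Subquotient.map_mem_sub (by rintro _ ⟨u, rfl⟩; exact ⟨f.toLin u, (f.map_T u).symm⟩)
        | 1 => Subquotient.map_mem_sub fun u hu =>
            (f.map_T u).symm.trans ((congrArg f.toLin hu).trans (map_zero _))
        | 2 => Subquotient.map_mem_sub (f.map_mem 0)
        | 3 => Subquotient.map_mem_sub (f.map_mem 1) }
  map_id X := Hom.ext (Submodule.mapQ_id _)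
  map_comp f g := Hom.ext (LinearMap.ext fun q => by
    obtain ⟨u, rfl⟩ := Submodule.mkQ_surjective _ q
    rfl)

instance : (homology k).PreservesZeroMorphisms := ⟨fun X Y => Hom.ext (LinearMap.ext fun q => by
  obtain ⟨u, rfl⟩ := Submodule.mkQ_surjective _ q
  exact map_zero (Submodule.mkQ _))⟩

/-- The even part of a linear map. -/
def evenPart {X Y : OddSpace k n} (ψ : X.V →ₗ[k] Y.V) : X.V →ₗ[k] Y.V :=
  Y.e ∘ₗ ψ ∘ₗ X.e + (LinearMap.id - Y.e) ∘ₗ ψ ∘ₗ (LinearMap.id - X.e)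

section evenPart

variable {X Y : OddSpace k n} {ψ : X.V →ₗ[k] Y.V}

theorem evenPart_apply (u : X.V) : evenPart ψ u =
    Y.e (ψ (X.e u)) + (ψ (u - X.e u) - Y.e (ψ (u - X.e u))) :=
  rfl

theorem evenPart_e (u : X.V) : evenPart ψ (X.e u) = Y.e (evenPart ψ u) := by
  simp only [evenPart_apply, X.e_e, Y.e_e, map_add, map_sub]
  abel

theorem evenPart_T (h : ∀ u, ψ (X.T u) = Y.T (ψ u)) (u : X.V) :
    evenPart ψ (X.T u) = Y.T (evenPart ψ u) := by
  simp only [evenPart_apply, e_T, map_add, map_sub, h]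
  abel

theorem evenPart_mem {Γ : Submodule k (X.V × Y.V)} {S : Submodule k X.V}
    (hS : S ∈ X.e.invtSubmodule) (hψ : ∀ u ∈ S, (u, ψ u) ∈ Γ)
    (hΓ : ∀ u u', (u, u') ∈ Γ → (X.e u, Y.e u') ∈ Γ) {u : X.V} (hu : u ∈ S) :
    (u, evenPart ψ u) ∈ Γ := by
  have hodd := hΓ _ _ (hψ _ (hS hu))
  have hsub := hψ _ (S.sub_mem hu (hS hu))
  have heven := Γ.add_mem hodd (Γ.sub_mem hsub (hΓ _ _ hsub))
  simpa only [evenPart_apply, Prod.mk_sub_mk, Prod.mk_add_mk, map_sub, X.e_e, sub_self, sub_zero,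
    add_sub_cancel] using heven

end evenPart

/-- Two nested homogeneous subspaces between `im T²` and `ker T²` in a nonzero finite-dimensional
space. -/
structure IsFlag (X : OddSpace k 2) : Prop where
  nontrivial : Nontrivial X.V
  finiteDimensional : FiniteDimensional k X.V
  range_le : range (X.T ^ 2) ≤ X.sub 0
  le : X.sub 0 ≤ X.sub 1
  le_ker : X.sub 1 ≤ ker (X.T ^ 2)

namespace IsFlag

variable {X Y : OddSpace k 2}

theorem range_le_sub (hX : IsFlag X) : ∀ i, range (X.T ^ 2) ≤ X.sub i
  | 0 => hX.range_le
  | 1 => hX.range_le.trans hX.le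

theorem sub_le_ker (hX : IsFlag X) : ∀ i, X.sub i ≤ ker (X.T ^ 2)
  | 0 => hX.le.trans hX.le_ker
  | 1 => hX.le_ker

theorem exists_hasString (hX : IsFlag X) (hT : X.T ^ 3 ≠ 0) :
    ∃ (d : Fin 2) (A : _), HasString 3 d A X := by
  have hT4 (u : X.V) : (X.T ^ 4) u = 0 :=
    hX.le_ker (hX.le (hX.range_le ⟨u, rfl⟩))
  obtain ⟨d, x, -, hx, hxe⟩ := exists_homogeneous X.e_e (Module.End.invtSubmodule.top_mem X.e)
    (fun h : ⊤ ≤ ker (X.T ^ 3) => hT (ker_eq_top.1 (top_le_iff.1 h)))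
  refine ⟨d, OddSpace.exists_hasString hxe (hT4 x) (Module.End.invtSubmodule.bot_mem X.e) hT4 hx
    fun i j hj => ?_⟩
  obtain hj' | hj' := le_or_gt 2 j
  · obtain ⟨j, rfl⟩ := Nat.exists_eq_add_of_le hj'
    exact .inl (hX.range_le_sub i ⟨(X.T ^ j) x, by rw [pow_add]; rfl⟩)
  · exact .inr fun u hu => Module.End.pow_map_zero_of_le (by omega) (hX.sub_le_ker i hu)

theorem nontrivial_homology (hX : IsFlag X) (hT : X.T ^ 3 = 0) :
    Nontrivial ((homology k).obj X).V := by
  by_contra h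
  rw [not_nontrivial_iff_subsingleton] at h
  have hker {u : X.V} (hu : (X.T ^ 2) u = 0) : u ∈ range (X.T ^ 2) :=
    Subquotient.mk_eq_zero (u := ⟨u, hu⟩).1 (h.elim _ _)
  have htop (u : X.V) : (X.T ^ 2) u = 0 := by
    obtain ⟨y, hy⟩ := hker (LinearMap.congr_fun hT u : (X.T ^ 2) (X.T u) = 0)
    exact (congrArg X.T hy).symm.trans (LinearMap.congr_fun hT y)
  obtain ⟨u, hu⟩ := @exists_ne _ hX.nontrivial (0 : X.V)
  obtain ⟨y, rfl⟩ := hker (htop u)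
  exact hu (htop y)

theorem isDoubleFlag_homology (hX : IsFlag X) (hT : X.T ^ 3 = 0) :
    IsDoubleFlag ((homology k).obj X) where
  nontrivial := hX.nontrivial_homology hT
  T_T q := by
    obtain ⟨u, rfl⟩ := Submodule.mkQ_surjective _ q
    exact Subquotient.mk_eq_zero.2 ⟨u, rfl⟩
  inf_eq := by
    ext q
    obtain ⟨u, rfl⟩ := Submodule.mkQ_surjective _ q
    constructor
    · rintro ⟨hr, hk⟩
      obtain ⟨y, hy⟩ := (Subquotient.mk_mem_sub X.range_sq_le_range).1 hr
      have hyk : (X.T ^ 2) y = 0 :=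
        (congrArg X.T hy).trans ((Subquotient.mk_mem_sub (range_sq_le_ker hT)).1 hk)
      exact ⟨Submodule.mkQ _ ⟨y, hyk⟩, congrArg (Submodule.mkQ _) (Subtype.ext hy)⟩
    · rintro ⟨q, hq⟩
      obtain ⟨y, rfl⟩ := Submodule.mkQ_surjective _ q
      rw [← hq]
      exact ⟨(Subquotient.mk_mem_sub X.range_sq_le_range).2 ⟨y, rfl⟩,
        (Subquotient.mk_mem_sub (range_sq_le_ker hT)).2 y.2⟩
  sup_eq := by
    refine le_antisymm (sup_le ?_ ?_) fun q hq => ?_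
    · rintro _ ⟨u, ⟨y, hy⟩, rfl⟩
      exact Subquotient.mk_eq_zero.2 ⟨y, congrArg X.T hy⟩
    · rintro _ ⟨u, hu, rfl⟩
      exact Subquotient.mk_eq_zero.2 ⟨0, (map_zero _).trans (mem_ker.1 hu).symm⟩
    · obtain ⟨u, rfl⟩ := Submodule.mkQ_surjective _ q
      obtain ⟨y, hy⟩ := Subquotient.mk_eq_zero.1 hq
      have hTy : X.T y ∈ ker (X.T ^ 2) := (congrArg X.T hy).trans u.2
      rw [← add_sub_cancel ⟨X.T y, hTy⟩ u, map_add]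
      refine Submodule.add_mem_sup ⟨_, ⟨y, rfl⟩, rfl⟩ ⟨_, ?_, rfl⟩
      exact (map_sub X.T _ _).trans (sub_eq_zero.2 hy.symm)
  le := Submodule.map_mono (Submodule.comap_mono hX.le)

theorem exists_string_lift {X Y : OddSpace k 2} (hX : X.T ^ 3 = 0) (hY : Y.T ^ 3 = 0)
    (φ : (homology k).obj X ⟶ (homology k).obj Y) (n : ℕ) (w : X.V) (hw : (X.T ^ n) w = 0) :
    ∃ w', (Y.T ^ n) w' = 0 ∧ ∀ a, a < n → n ≤ a + 2 →
      ((X.T ^ a) w, (Y.T ^ a) w') ∈ Subquotient.rel φ.toLin := by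
  match n with
  | 0 => exact ⟨0, map_zero _, fun a ha => absurd ha (Nat.not_lt_zero a)⟩
  | 1 =>
    obtain ⟨w', hw', h⟩ := Subquotient.exists_mem_rel_of_mem_sub (φ.map_mem 1)
      (show w ∈ ker (X.T ^ 2) from (congrArg X.T hw).trans (map_zero _)) hw
    refine ⟨w', hw', fun a ha _ => ?_⟩
    obtain rfl : a = 0 := by omega
    exact h
  | 2 =>
    obtain ⟨w', h⟩ := Subquotient.exists_mem_rel φ.toLin hw
    obtain ⟨-, hw', -⟩ := Subquotient.mem_rel.1 h
    refine ⟨w', hw', fun a ha _ => ?_⟩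
    obtain rfl | rfl : a = 0 ∨ a = 1 := by omega
    exacts [h, Subquotient.apply_mem_rel X.range_sq_le_comap_T Y.range_sq_le_comap_T
      φ.map_T h]
  | n + 3 =>
    obtain ⟨_, ⟨w', rfl⟩, h⟩ := Subquotient.exists_mem_rel_of_mem_sub (φ.map_mem 0)
      (show X.T w ∈ ker (X.T ^ 2) from LinearMap.congr_fun hX w) ⟨w, rfl⟩
    refine ⟨w', Module.End.pow_map_zero_of_le (by omega) (LinearMap.congr_fun hY w'),
      fun a _ ha => ?_⟩
    obtain rfl | ⟨b, rfl⟩ : a = 1 ∨ ∃ b, a = 2 + b := by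
      obtain ha | ha := (show 1 ≤ a by omega).eq_or_lt
      exacts [.inl ha.symm, .inr (Nat.exists_eq_add_of_le ha)]
    · exact h
    · rw [pow_add, pow_add]
      have hker {Z : OddSpace k 2} (hZ : Z.T ^ 3 = 0) (u : Z.V) : (Z.T ^ 2) u ∈ ker (Z.T ^ 2) :=
        show (Z.T ^ 2) ((Z.T ^ 2) u) = 0 from LinearMap.congr_fun hZ (Z.T u)
      exact Subquotient.mem_rel_of_mem (hker hX _) (hker hY _) ⟨_, rfl⟩ ⟨_, rfl⟩

theorem homology_map_surjective (hX : IsFlag X) (hY : IsFlag Y) (hXT : X.T ^ 3 = 0)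
    (hYT : Y.T ^ 3 = 0) : Function.Surjective ((homology k).map : (X ⟶ Y) → _) := by
  intro φ
  have := hX.finiteDimensional
  obtain ⟨ψ, hψT, hψ⟩ := exists_comm_lift ⟨3, hXT⟩ (fun _ : Unit => 2)
    (fun _ => Subquotient.rel φ.toLin) fun n w hw => by
      obtain ⟨w', hw', h⟩ := exists_string_lift hXT hYT φ n w hw
      exact ⟨w', hw', fun _ => h⟩
  have hrel {u : X.V} (hu : u ∈ ker (X.T ^ 2)) :
      (u, evenPart ψ u) ∈ Subquotient.rel φ.toLin :=
    evenPart_mem X.ker_sq_mem_invtSubmodule (hψ ()) (fun _ _ =>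
      Subquotient.apply_mem_rel X.range_sq_mem_invtSubmodule
        Y.range_sq_mem_invtSubmodule φ.map_e) hu
  refine ⟨⟨evenPart ψ, evenPart_T hψT, evenPart_e, fun i u hu => ?_⟩, Hom.ext
    (Subquotient.map_eq_of_mem_rel (Hom.map_range_sq ⟨_, _, _, _⟩) fun u hu => hrel hu)⟩
  have hmem := hrel (hX.sub_le_ker i hu)
  match i with
  | 0 => exact Subquotient.mem_of_mem_rel_of_sub_le (φ.map_mem 2) (hY.range_le_sub 0) hmem hu
  | 1 => exact Subquotient.mem_of_mem_rel_of_sub_le (φ.map_mem 3) (hY.range_le_sub 1) hmem hu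

end IsFlag

theorem finitelyLinked_isFlag (k : Type v) [Field k] :
    FinitelyLinked (IsFlag : OddSpace k 2 → Prop) := by
  have hcube : FinitelyLinked fun X : OddSpace k 2 => IsFlag X ∧ X.T ^ 3 = 0 :=
    (finitelyLinked_isDoubleFlag k).of_full (homology k)
      (fun X Y hX hY => IsFlag.homology_map_surjective hX.1 hY.1 hX.2 hY.2)
      fun X hX => hX.1.isDoubleFlag_homology hX.2
  refine ((finitelyLinked_hasString k 2 3).or hcube).mono fun X hX => ?_
  by_cases hT : X.T ^ 3 = 0
  · exact .inr ⟨hX, hT⟩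
  · exact .inl (hX.exists_hasString hT)

end OddSpace

/-- A representation of the preprojective algebra of the half-line quiver `0 — 1 — 2 — ⋯`. The
relation at the vertex `0` is omitted, since the space there will vanish. -/
structure PreprojectiveRep (k : Type v) [Field k] where
  V : ℕ → Type u
  [addCommGroup : ∀ i, AddCommGroup (V i)]
  [module : ∀ i, Module k (V i)]
  a : ∀ i, V i →ₗ[k] V (i + 1)
  b : ∀ i, V (i + 1) →ₗ[k] V i
  b_a : ∀ i u, b (i + 1) (a (i + 1) u) = a i (b i u)

namespace PreprojectiveRep

open LinearMap

attribute [instance] addCommGroup module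

variable {k : Type v} [Field k]

/-- Homomorphisms of representations. -/
@[ext]
structure Hom (X Y : PreprojectiveRep k) where
  toLin : ∀ i, X.V i →ₗ[k] Y.V i
  map_a : ∀ i u, toLin (i + 1) (X.a i u) = Y.a i (toLin i u)
  map_b : ∀ i u, toLin i (X.b i u) = Y.b i (toLin (i + 1) u)

instance : Category (PreprojectiveRep k) where
  Hom := Hom
  id X := ⟨fun _ => LinearMap.id, fun _ _ => rfl, fun _ _ => rfl⟩
  comp f g := ⟨fun i => g.toLin i ∘ₗ f.toLin i, fun i u => by simp [f.map_a, g.map_a],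
    fun i u => by simp [f.map_b, g.map_b]⟩

instance : HasZeroMorphisms (PreprojectiveRep k) where
  zero X Y := ⟨⟨0, fun i u => by simp, fun i u => by simp⟩⟩
  comp_zero _ _ := Hom.ext (funext fun _ => LinearMap.zero_comp _)
  zero_comp _ _ _ f := Hom.ext (funext fun i => LinearMap.comp_zero (f.toLin i))

/-- Evaluation of representations at a vertex. -/
def vertex (k : Type v) [Field k] (i : ℕ) : PreprojectiveRep k ⥤ ModuleCat.{u} k where
  obj X := ModuleCat.of k (X.V i)
  map f := ModuleCat.ofHom (f.toLin i)

instance (i : ℕ) : (vertex k i).PreservesZeroMorphisms := ⟨fun _ _ => rfl⟩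

theorem vertex_map_surjective {X Y : PreprojectiveRep k} {i : ℕ} [Subsingleton (X.V i)]
    [Subsingleton (X.V (i + 2))] [Subsingleton (Y.V i)] [Subsingleton (Y.V (i + 2))] :
    Function.Surjective ((vertex k (i + 1)).map : (X ⟶ Y) → _) := by
  intro φ
  let φ' : X.V (i + 1) →ₗ[k] Y.V (i + 1) := φ.hom
  refine ⟨⟨Pi.single (i + 1) φ', fun j u => ?_, fun j u => ?_⟩,
    ModuleCat.hom_ext (Pi.single_eq_same (M := fun j => X.V j →ₗ[k] Y.V j) (i + 1) φ')⟩
  · obtain rfl | hj := eq_or_ne j (i + 1)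
    · exact Subsingleton.elim _ _
    obtain rfl | hj' := eq_or_ne j i
    · rw [Subsingleton.elim u 0, map_zero, map_zero, map_zero, map_zero]
    · rw [Pi.single_eq_of_ne hj, Pi.single_eq_of_ne fun h => hj' (Nat.succ_injective h),
        LinearMap.zero_apply, LinearMap.zero_apply, map_zero]
  · obtain rfl | hj := eq_or_ne j (i + 1)
    · rw [Subsingleton.elim u 0, map_zero, map_zero, map_zero, map_zero]
    obtain rfl | hj' := eq_or_ne j i
    · exact Subsingleton.elim _ _
    · rw [Pi.single_eq_of_ne hj, Pi.single_eq_of_ne fun h => hj' (Nat.succ_injective h),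
        LinearMap.zero_apply, LinearMap.zero_apply, map_zero]

/-- The spaces at the vertices `2` and `3`, with the images of the spaces at the vertices `1` and
`4`, and the kernels of the maps to them. -/
def middle (k : Type v) [Field k] : PreprojectiveRep k ⥤ OddSpace k 2 where
  obj X :=
    { V := X.V 2 × X.V 3
      T := (X.b 2 ∘ₗ snd k _ _).prod (X.a 2 ∘ₗ fst k _ _)
      e := (fst k _ _).prod 0
      sub := ![(range (X.a 1)).prod (range (X.b 3)), (ker (X.b 1)).prod (ker (X.a 3))]
      e_e := fun _ => rfl
      T_e_add_e_T := fun u => Prod.ext (by simp) (by simp)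
      sub_mem := fun
        | 0 => fun u hu => ⟨hu.1, Submodule.zero_mem _⟩
        | 1 => fun u hu => ⟨hu.1, Submodule.zero_mem _⟩ }
  map {X Y} f :=
    { toLin := (f.toLin 2).prodMap (f.toLin 3)
      map_T := fun u => Prod.ext (f.map_b 2 u.2) (f.map_a 2 u.1)
      map_e := fun u => Prod.ext rfl (map_zero (f.toLin 3))
      map_mem := fun
        | 0 => by
          rintro _ ⟨⟨u, hu⟩, ⟨v, hv⟩⟩
          exact ⟨⟨f.toLin 1 u, by rw [← f.map_a, hu]; rfl⟩,
            ⟨f.toLin 4 v, by rw [← f.map_b, hv]; rfl⟩⟩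
        | 1 => fun u hu =>
          ⟨(f.map_b 1 u.1).symm.trans ((congrArg (f.toLin 1) hu.1).trans (map_zero _)),
            (f.map_a 3 u.2).symm.trans ((congrArg (f.toLin 4) hu.2).trans (map_zero _))⟩ }

instance : (middle k).PreservesZeroMorphisms :=
  ⟨fun _ _ => OddSpace.Hom.ext (LinearMap.ext fun _ => rfl)⟩

theorem exists_generalizedInverse {V W : Type*} [AddCommGroup V] [Module k V] [AddCommGroup W]
    [Module k W] (f : V →ₗ[k] W) : ∃ g : W →ₗ[k] V, ∀ u, f (g (f u)) = f u := by
  obtain ⟨s, hs⟩ := f.rangeRestrict.exists_rightInverse_of_surjective f.range_rangeRestrict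
  obtain ⟨p, hp⟩ := (range f).subtype.exists_leftInverse_of_injective (range f).ker_subtype
  refine ⟨s ∘ₗ p, fun u => ?_⟩
  have hpu : p (f u) = f.rangeRestrict u := LinearMap.congr_fun hp (f.rangeRestrict u)
  rw [LinearMap.comp_apply, hpu]
  exact congrArg Subtype.val (LinearMap.congr_fun hs (f.rangeRestrict u))

theorem exists_extension {V V' W W' : Type*} [AddCommGroup V] [Module k V] [AddCommGroup V']
    [Module k V'] [AddCommGroup W] [Module k W] [AddCommGroup W'] [Module k W']
    {α : W →ₗ[k] V} {β : V →ₗ[k] W} {α' : W' →ₗ[k] V'} {β' : V' →ₗ[k] W'} {φ : V →ₗ[k] V'}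
    (hα : ∀ u ∈ range α, φ u ∈ range α') (hβ : ∀ u ∈ ker β, φ u ∈ ker β')
    (h : ∀ u, φ (α (β u)) = α' (β' (φ u))) :
    ∃ ψ : W →ₗ[k] W', (∀ u, ψ (β u) = β' (φ u)) ∧ ∀ w, φ (α w) = α' (ψ w) := by
  obtain ⟨q, hq⟩ := exists_generalizedInverse β
  obtain ⟨r, hr⟩ := exists_generalizedInverse α'
  have hrφ (w : W) : α' (r (φ (α w))) = φ (α w) := by
    obtain ⟨w', hw'⟩ := hα _ ⟨w, rfl⟩
    rw [← hw', hr]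
  refine ⟨r ∘ₗ φ ∘ₗ α ∘ₗ (LinearMap.id - β ∘ₗ q) + β' ∘ₗ φ ∘ₗ q, fun u => ?_, fun w => ?_⟩
  · have hker : β' (φ (q (β u) - u)) = 0 := hβ _ (by rw [mem_ker, map_sub, hq, sub_self])
    rw [map_sub, map_sub, sub_eq_zero] at hker
    simp [hq, hker]
  · simp [hrφ, ← h]

theorem exists_toLin_middle_eq {X Y : PreprojectiveRep k}
    (φ : (middle k).obj X ⟶ (middle k).obj Y) :
    ∃ (φ₂ : X.V 2 →ₗ[k] Y.V 2) (φ₃ : X.V 3 →ₗ[k] Y.V 3), ∀ u v, φ.toLin (u, v) = (φ₂ u, φ₃ v) := by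
  let f : X.V 2 × X.V 3 →ₗ[k] Y.V 2 × Y.V 3 := φ.toLin
  have he (u v) : f (u, 0) = ((f (u, v)).1, 0) := φ.map_e (u, v)
  refine ⟨fst k _ _ ∘ₗ f ∘ₗ inl k _ _, snd k _ _ ∘ₗ f ∘ₗ inr k _ _, fun u v => ?_⟩
  have hadd : f (u, v) = f (u, 0) + f (0, v) := by rw [← map_add]; simp
  refine Prod.ext (congrArg Prod.fst (he u v)).symm ?_
  exact (congrArg Prod.snd hadd).trans (by simp [he u v])

/-- The finite-dimensional nonzero representations supported at the vertices `1`, `2`, `3`, `4`. -/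
structure IsTypeA (X : PreprojectiveRep k) : Prop where
  finiteDimensional : ∀ i, FiniteDimensional k (X.V i)
  exists_nontrivial : ∃ i, Nontrivial (X.V i)
  zero : Subsingleton (X.V 0)
  ge : ∀ i, 5 ≤ i → Subsingleton (X.V i)

namespace IsTypeA

variable {X Y : PreprojectiveRep k}

theorem isFlag_middle (hX : IsTypeA X) (h : Nontrivial (X.V 2) ∨ Nontrivial (X.V 3)) :
    OddSpace.IsFlag ((middle k).obj X) where
  nontrivial := by
    rcases h with h | h
    exacts [inferInstanceAs (Nontrivial (X.V 2 × X.V 3)),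
      inferInstanceAs (Nontrivial (X.V 2 × X.V 3))]
  finiteDimensional :=
    have := hX.finiteDimensional
    inferInstanceAs (FiniteDimensional k (X.V 2 × X.V 3))
  range_le := by
    rintro _ ⟨u, rfl⟩
    exact ⟨⟨X.b 1 u.1, (X.b_a 1 u.1).symm⟩, ⟨X.a 3 u.2, X.b_a 2 u.2⟩⟩
  le := by
    rintro _ ⟨⟨u, hu⟩, ⟨v, hv⟩⟩
    have := hX.zero
    have := hX.ge 5 le_rfl
    refine ⟨?_, ?_⟩
    · change X.b 1 _ = 0
      rw [← hu, X.b_a, Subsingleton.elim (X.b 0 u) 0, map_zero]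
    · change X.a 3 _ = 0
      rw [← hv, ← X.b_a, Subsingleton.elim (X.a 4 v) 0, map_zero]
  le_ker := by
    rintro ⟨u, v⟩ ⟨hu, hv⟩
    refine Prod.ext ?_ ?_
    · exact (X.b_a 1 u).trans ((congrArg (X.a 1) hu).trans (map_zero _))
    · exact (X.b_a 2 v).symm.trans ((congrArg (X.b 3) hv).trans (map_zero _))

theorem exists_hom_toLin_eq (hX : IsTypeA X) (hY : IsTypeA Y) {φ₁ : X.V 1 →ₗ[k] Y.V 1}
    {φ₂ : X.V 2 →ₗ[k] Y.V 2} {φ₃ : X.V 3 →ₗ[k] Y.V 3} {φ₄ : X.V 4 →ₗ[k] Y.V 4}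
    (ha₁ : ∀ u, φ₂ (X.a 1 u) = Y.a 1 (φ₁ u)) (hb₁ : ∀ u, φ₁ (X.b 1 u) = Y.b 1 (φ₂ u))
    (ha₂ : ∀ u, φ₃ (X.a 2 u) = Y.a 2 (φ₂ u)) (hb₂ : ∀ u, φ₂ (X.b 2 u) = Y.b 2 (φ₃ u))
    (ha₃ : ∀ u, φ₄ (X.a 3 u) = Y.a 3 (φ₃ u)) (hb₃ : ∀ u, φ₃ (X.b 3 u) = Y.b 3 (φ₄ u)) :
    ∃ f : X ⟶ Y, f.toLin 2 = φ₂ ∧ f.toLin 3 = φ₃ := by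
  have hX0 := hX.zero
  have hY0 := hY.zero
  have hX5 (i) := hX.ge (i + 5) (Nat.le_add_left 5 i)
  have hY5 (i) := hY.ge (i + 5) (Nat.le_add_left 5 i)
  refine ⟨⟨fun | 0 => 0 | 1 => φ₁ | 2 => φ₂ | 3 => φ₃ | 4 => φ₄ | i + 5 => 0, ?_, ?_⟩, rfl, rfl⟩
  · exact fun
      | 0 => fun u => by rw [Subsingleton.elim u 0]; simp only [map_zero]
      | 1 => ha₁
      | 2 => ha₂
      | 3 => ha₃
      | 4 => fun _ => (hY5 0).elim _ _
      | i + 5 => fun _ => (hY5 (i + 1)).elim _ _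
  · exact fun
      | 0 => fun _ => hY0.elim _ _
      | 1 => hb₁
      | 2 => hb₂
      | 3 => hb₃
      | 4 => fun u => by rw [(hX5 0).elim u 0]; simp only [map_zero]
      | i + 5 => fun _ => (hY5 i).elim _ _

theorem middle_map_surjective (hX : IsTypeA X) (hY : IsTypeA Y) :
    Function.Surjective ((middle k).map : (X ⟶ Y) → _) := by
  intro φ
  obtain ⟨φ₂, φ₃, hφ⟩ := exists_toLin_middle_eq φ
  have hT (u v) : ((φ₂ (X.b 2 v), φ₃ (X.a 2 u)) : Y.V 2 × Y.V 3) = (Y.b 2 (φ₃ v), Y.a 2 (φ₂ u)) :=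
    (hφ _ _).symm.trans ((φ.map_T (u, v)).trans (congrArg ((middle k).obj Y).T (hφ u v)))
  have ha (u) : φ₃ (X.a 2 u) = Y.a 2 (φ₂ u) := congrArg Prod.snd (hT u 0)
  have hb (v) : φ₂ (X.b 2 v) = Y.b 2 (φ₃ v) := congrArg Prod.fst (hT 0 v)
  have hrange {u v} (hu : u ∈ range (X.a 1)) (hv : v ∈ range (X.b 3)) :
      φ₂ u ∈ range (Y.a 1) ∧ φ₃ v ∈ range (Y.b 3) := by
    have h := φ.map_mem 0 (u, v) ⟨hu, hv⟩
    rwa [hφ] at h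
  have hker {u v} (hu : u ∈ ker (X.b 1)) (hv : v ∈ ker (X.a 3)) :
      φ₂ u ∈ ker (Y.b 1) ∧ φ₃ v ∈ ker (Y.a 3) := by
    have h := φ.map_mem 1 (u, v) ⟨hu, hv⟩
    rwa [hφ] at h
  obtain ⟨φ₁, hb₁, ha₁⟩ := exists_extension (φ := φ₂)
    (fun u hu => (hrange hu (Submodule.zero_mem _)).1)
    (fun u hu => (hker hu (Submodule.zero_mem _)).1)
    fun u => by rw [← X.b_a, hb, ha, Y.b_a]
  obtain ⟨φ₄, ha₃, hb₃⟩ := exists_extension (φ := φ₃)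
    (fun v hv => (hrange (Submodule.zero_mem _) hv).2)
    (fun v hv => (hker (Submodule.zero_mem _) hv).2)
    fun v => by rw [X.b_a, ha, hb, Y.b_a]
  obtain ⟨f, rfl, rfl⟩ := exists_hom_toLin_eq hX hY ha₁ hb₁ ha hb ha₃ hb₃
  exact ⟨f, OddSpace.Hom.ext (LinearMap.ext fun u => (hφ u.1 u.2).symm)⟩

end IsTypeA

theorem finitelyLinked_isTypeA (k : Type v) [Field k] :
    FinitelyLinked (IsTypeA : PreprojectiveRep k → Prop) := by
  have hmiddle : FinitelyLinked fun X : PreprojectiveRep k =>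
      IsTypeA X ∧ (Nontrivial (X.V 2) ∨ Nontrivial (X.V 3)) :=
    (OddSpace.finitelyLinked_isFlag k).of_full (middle k)
      (fun X Y hX hY => hX.1.middle_map_surjective hY.1) fun X hX => hX.1.isFlag_middle hX.2
  have hvertex (i : ℕ) : FinitelyLinked fun X : PreprojectiveRep k => Subsingleton (X.V i) ∧
      Subsingleton (X.V (i + 2)) ∧ Nontrivial (X.V (i + 1)) :=
    (finitelyLinked_moduleCat k).of_full (vertex k (i + 1)) (fun X Y hX hY => by
      have := hX.1; have := hX.2.1; have := hY.1; have := hY.2.1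
      exact vertex_map_surjective) fun X hX => hX.2.2
  refine (hmiddle.or ((hvertex 0).or (hvertex 3))).mono fun X hX => ?_
  by_cases h : Nontrivial (X.V 2) ∨ Nontrivial (X.V 3)
  · exact .inl ⟨hX, h⟩
  rw [not_or, not_nontrivial_iff_subsingleton, not_nontrivial_iff_subsingleton] at h
  obtain ⟨i, hi⟩ := hX.exists_nontrivial
  rw [← not_subsingleton_iff_nontrivial] at hi
  match i with
  | 0 => exact absurd hX.zero hi
  | 1 => exact .inr (.inl ⟨hX.zero, h.1, not_subsingleton_iff_nontrivial.1 hi⟩)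
  | 2 => exact absurd h.1 hi
  | 3 => exact absurd h.2 hi
  | 4 => exact .inr (.inr ⟨h.2, hX.ge 5 le_rfl, not_subsingleton_iff_nontrivial.1 hi⟩)
  | i + 5 => exact absurd (hX.ge _ (Nat.le_add_left 5 i)) hi

end PreprojectiveRep

/-- A vector space with an operator `T` and a `T`-invariant subspace `U`. -/
structure InvariantPair (k : Type v) [Field k] where
  V : Type u
  [addCommGroup : AddCommGroup V]
  [module : Module k V]
  T : Module.End k V
  U : Submodule k V
  U_mem : U ∈ T.invtSubmodule

namespace InvariantPair

open LinearMap

attribute [instance] addCommGroup module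

variable {k : Type v} [Field k]

/-- Linear maps compatible with the operators and the subspaces. -/
@[ext]
structure Hom (X Y : InvariantPair k) where
  toLin : X.V →ₗ[k] Y.V
  map_T : ∀ u, toLin (X.T u) = Y.T (toLin u)
  map_mem : ∀ u ∈ X.U, toLin u ∈ Y.U

instance : Category (InvariantPair k) where
  Hom := Hom
  id X := ⟨LinearMap.id, fun _ => rfl, fun _ hu => hu⟩
  comp f g := ⟨g.toLin ∘ₗ f.toLin, fun u => by simp [f.map_T, g.map_T],
    fun u hu => g.map_mem _ (f.map_mem u hu)⟩

instance : HasZeroMorphisms (InvariantPair k) where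
  zero X Y := ⟨⟨0, fun u => by simp, fun u _ => Y.U.zero_mem⟩⟩
  comp_zero _ _ := Hom.ext (LinearMap.zero_comp _)
  zero_comp _ _ _ f := Hom.ext (LinearMap.comp_zero f.toLin)

/-- The functor forgetting the operator and the subspace. -/
def forget (k : Type v) [Field k] : InvariantPair k ⥤ ModuleCat.{u} k where
  obj X := ModuleCat.of k X.V
  map f := ModuleCat.ofHom f.toLin

instance : (forget k).PreservesZeroMorphisms := ⟨fun _ _ => rfl⟩

/-- The vectors of `U` of height at least `i` in `V`. -/
def outer (X : InvariantPair k) (i : ℕ) : Submodule k X.V := X.U ⊓ range (X.T ^ i)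

/-- The vectors of `U` of height at least `i` in `U`. -/
def inner (X : InvariantPair k) (i : ℕ) : Submodule k X.V := X.U.map (X.T ^ i)

theorem outer_le_comap_T (X : InvariantPair k) (i : ℕ) :
    X.outer i ≤ (X.outer (i + 1)).comap X.T := by
  rintro _ ⟨hu, y, rfl⟩
  exact ⟨X.U_mem hu, y, by rw [pow_succ']; rfl⟩

theorem inner_le_comap_T (X : InvariantPair k) (i : ℕ) :
    X.inner i ≤ (X.inner (i + 1)).comap X.T := by
  rintro _ ⟨u, hu, rfl⟩
  exact ⟨u, hu, by rw [pow_succ']; rfl⟩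

theorem outer_succ_le (X : InvariantPair k) (i : ℕ) : X.outer (i + 1) ≤ X.outer i := by
  rintro _ ⟨hu, y, rfl⟩
  exact ⟨hu, X.T y, rfl⟩

theorem inner_succ_le (X : InvariantPair k) (i : ℕ) : X.inner (i + 1) ≤ X.inner i := by
  rintro _ ⟨u, hu, rfl⟩
  exact ⟨X.T u, X.U_mem hu, rfl⟩

theorem pow_T_mem (X : InvariantPair k) (i : ℕ) : ∀ u ∈ X.U, (X.T ^ i) u ∈ X.U := by
  induction i with
  | zero => exact fun u hu => hu
  | succ i ih => exact fun u hu => by rw [pow_succ']; exact X.U_mem (ih u hu)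

theorem inner_le_outer (X : InvariantPair k) (i : ℕ) : X.inner i ≤ X.outer i := by
  rintro _ ⟨u, hu, rfl⟩
  exact ⟨X.pow_T_mem i u hu, u, rfl⟩

theorem Hom.outer_le {X Y : InvariantPair k} (f : Hom X Y) (i : ℕ) :
    X.outer i ≤ (Y.outer i).comap f.toLin := by
  rintro _ ⟨hu, y, rfl⟩
  exact ⟨f.map_mem _ hu, f.toLin y, (map_pow_apply_of_comm f.map_T i y).symm⟩

theorem Hom.inner_le {X Y : InvariantPair k} (f : Hom X Y) (i : ℕ) :
    X.inner i ≤ (Y.inner i).comap f.toLin := by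
  rintro _ ⟨u, hu, rfl⟩
  exact ⟨f.toLin u, f.map_mem u hu, (map_pow_apply_of_comm f.map_T i u).symm⟩

/-- The representation on the spaces `(U ∩ im Tⁱ) / Tⁱ U` given by `T` and the inclusions, which
measures the failure of `U` to be pure in `V`. -/
def heightsObj (X : InvariantPair k) : PreprojectiveRep k where
  V i := Subquotient (X.outer i) (X.inner i)
  a i := Subquotient.map X.T (X.outer_le_comap_T i) (X.inner_le_comap_T i)
  b i := Subquotient.map LinearMap.id (X.outer_succ_le i) (X.inner_succ_le i)
  b_a i q := by
    obtain ⟨u, rfl⟩ := Submodule.mkQ_surjective _ q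
    exact congrArg (Submodule.mkQ _) (Subtype.ext rfl)

/-- The functor `X ↦ (U ∩ im Tⁱ) / Tⁱ U`; it is full on finite-dimensional objects with `T`
nilpotent. -/
def heights (k : Type v) [Field k] : InvariantPair k ⥤ PreprojectiveRep k where
  obj := heightsObj
  map f :=
    { toLin := fun i => Subquotient.map f.toLin (Hom.outer_le f i) (Hom.inner_le f i)
      map_a := fun i q => by
        obtain ⟨u, rfl⟩ := Submodule.mkQ_surjective _ q
        exact congrArg (Submodule.mkQ _) (Subtype.ext (f.map_T u))
      map_b := fun i q => by
        obtain ⟨u, rfl⟩ := Submodule.mkQ_surjective _ q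
        exact congrArg (Submodule.mkQ _) (Subtype.ext rfl) }
  map_id X := PreprojectiveRep.Hom.ext (funext fun _ => Submodule.mapQ_id _)
  map_comp f g := PreprojectiveRep.Hom.ext (funext fun _ => LinearMap.ext fun q => by
    obtain ⟨u, rfl⟩ := Submodule.mkQ_surjective _ q
    rfl)

instance : (heights k).PreservesZeroMorphisms :=
  ⟨fun X Y => PreprojectiveRep.Hom.ext (funext fun _ => LinearMap.ext fun q => by
    obtain ⟨u, rfl⟩ := Submodule.mkQ_surjective _ q
    exact map_zero (Submodule.mkQ _))⟩

section Full

variable {X Y : InvariantPair k}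

theorem T_mem_rel (φ : (heights k).obj X ⟶ (heights k).obj Y) {i : ℕ} {u : X.V} {u' : Y.V}
    (h : (u, u') ∈ Subquotient.rel (φ.toLin i)) :
    (X.T u, Y.T u') ∈ Subquotient.rel (φ.toLin (i + 1)) :=
  Subquotient.apply_mem_rel (X.inner_le_comap_T i) (Y.inner_le_comap_T i) (φ.map_a i) h

theorem antitone_rel (φ : (heights k).obj X ⟶ (heights k).obj Y) :
    Antitone fun i => Subquotient.rel (φ.toLin i) :=
  antitone_nat_of_succ_le fun i _ h =>
    Subquotient.apply_mem_rel (X.inner_succ_le i) (Y.inner_succ_le i) (φ.map_b i) h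

theorem pow_T_mem_rel (φ : (heights k).obj X ⟶ (heights k).obj Y) {n j : ℕ} {u : X.V} {u' : Y.V}
    (h : ((X.T ^ n) u, (Y.T ^ n) u') ∈ Subquotient.rel (φ.toLin n)) (hj : n ≤ j) :
    ((X.T ^ j) u, (Y.T ^ j) u') ∈ Subquotient.rel (φ.toLin j) := by
  induction j, hj using Nat.le_induction with
  | base => exact h
  | succ j _ ih => rw [pow_succ', pow_succ']; exact T_mem_rel φ ih

/-- The operator on `V / U`. -/
def quotientT (X : InvariantPair k) : Module.End k (X.V ⧸ X.U) := X.U.mapQ X.U X.T X.U_mem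

theorem mkQ_pow_T (X : InvariantPair k) (n : ℕ) (u : X.V) :
    X.U.mkQ ((X.T ^ n) u) = (X.quotientT ^ n) (X.U.mkQ u) :=
  map_pow_apply_of_comm (T' := X.quotientT) (ψ := X.U.mkQ) (fun _ => rfl) n u

theorem exists_quotient_lift [FiniteDimensional k X.V] (hT : IsNilpotent X.T)
    (φ : (heights k).obj X ⟶ (heights k).obj Y) : ∃ G : X.V ⧸ X.U →ₗ[k] Y.V ⧸ Y.U,
      (∀ q, G (X.quotientT q) = Y.quotientT (G q)) ∧ ∀ i u u', (X.T ^ i) u ∈ X.U →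
        Y.U.mkQ u' = G (X.U.mkQ u) →
          ((X.T ^ i) u, (Y.T ^ i) u') ∈ Subquotient.rel (φ.toLin i) := by
  have hnil : IsNilpotent X.quotientT := by
    obtain ⟨n, hn⟩ := hT
    refine ⟨n, LinearMap.ext fun q => ?_⟩
    obtain ⟨u, rfl⟩ := Submodule.mkQ_surjective _ q
    rw [← mkQ_pow_T, hn, LinearMap.zero_apply, map_zero, LinearMap.zero_apply]
  obtain ⟨G, hG, hΓ⟩ := exists_comm_lift (T' := Y.quotientT) hnil (fun i : ℕ => i)
    (fun i => ((Subquotient.rel (φ.toLin i)).comap ((X.T ^ i).prodMap (Y.T ^ i))).map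
      (X.U.mkQ.prodMap Y.U.mkQ)) fun n w hw => by
      obtain ⟨x, rfl⟩ := X.U.mkQ_surjective w
      rw [← mkQ_pow_T, Submodule.mkQ_apply, Submodule.Quotient.mk_eq_zero] at hw
      obtain ⟨u', hu'⟩ := Subquotient.exists_mem_rel (φ.toLin n) ⟨hw, x, rfl⟩
      obtain ⟨-, ⟨hxU, x', rfl⟩, -⟩ := Subquotient.mem_rel.1 hu'
      refine ⟨Y.U.mkQ x', ?_, fun i a _ hi => ⟨((X.T ^ a) x, (Y.T ^ a) x'), ?_,
        Prod.ext (mkQ_pow_T X a x) (mkQ_pow_T Y a x')⟩⟩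
      · rw [← mkQ_pow_T]
        exact (Submodule.Quotient.mk_eq_zero _).2 hxU
      · have h := antitone_rel φ (Nat.le_add_right i a)
          (pow_T_mem_rel φ hu' (by omega : n ≤ i + a))
        rwa [pow_add, pow_add] at h
  refine ⟨G, hG, fun i u u' hu hu' => ?_⟩
  obtain ⟨⟨v, v'⟩, hv, heq⟩ := hΓ i (X.U.mkQ u) (by
    rw [← mkQ_pow_T]; exact (Submodule.Quotient.mk_eq_zero _).2 hu)
  obtain ⟨hvu, hvu'⟩ := Prod.ext_iff.1 heq
  have hsub : u - v ∈ X.U := (Submodule.Quotient.eq _).1 hvu.symm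
  have hsub' : u' - v' ∈ Y.U := (Submodule.Quotient.eq _).1 (hu'.trans hvu'.symm)
  have hinner := Subquotient.mem_rel_of_mem (φ := φ.toLin i)
    (X.inner_le_outer i ⟨_, hsub, rfl⟩) (Y.inner_le_outer i ⟨_, hsub', rfl⟩)
    ⟨_, hsub, rfl⟩ ⟨_, hsub', rfl⟩
  simpa using Submodule.add_mem _ hinner hv

theorem exists_lift [FiniteDimensional k X.V] (hT : IsNilpotent X.T)
    (φ : (heights k).obj X ⟶ (heights k).obj Y) {G : X.V ⧸ X.U →ₗ[k] Y.V ⧸ Y.U}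
    (hG : ∀ q, G (X.quotientT q) = Y.quotientT (G q))
    (hφ : ∀ i u u', (X.T ^ i) u ∈ X.U → Y.U.mkQ u' = G (X.U.mkQ u) →
      ((X.T ^ i) u, (Y.T ^ i) u') ∈ Subquotient.rel (φ.toLin i)) :
    ∃ g : X.V →ₗ[k] Y.V, (∀ u, g (X.T u) = Y.T (g u)) ∧
      ∀ u, Y.U.mkQ (g u) = G (X.U.mkQ u) := by
  obtain ⟨m, hm⟩ := hT
  obtain ⟨g, hg, hΓ⟩ := exists_comm_lift (T' := Y.T) ⟨m, hm⟩ (fun _ : Unit => m)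
    (fun _ => eqLocus (Y.U.mkQ ∘ₗ snd k X.V Y.V) (G ∘ₗ X.U.mkQ ∘ₗ fst k X.V Y.V)) fun n w hw => by
      obtain ⟨w', hw'⟩ := Y.U.mkQ_surjective (G (X.U.mkQ w))
      have hrel := hφ n w w' (by rw [hw]; exact X.U.zero_mem) hw'
      rw [hw] at hrel
      obtain ⟨u', hu', hTu'⟩ := Subquotient.mem_of_mem_rel hrel (Submodule.zero_mem _)
      have hmk : Y.U.mkQ (w' - u') = G (X.U.mkQ w) := by
        rw [map_sub, hw', sub_eq_self]
        exact (Submodule.Quotient.mk_eq_zero _).2 hu'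
      refine ⟨w' - u', by rw [map_sub, hTu', sub_self], fun _ a _ _ => ?_⟩
      change Y.U.mkQ ((Y.T ^ a) (w' - u')) = G (X.U.mkQ ((X.T ^ a) w))
      rw [mkQ_pow_T, hmk, mkQ_pow_T, map_pow_apply_of_comm hG]
  exact ⟨g, hg, fun u => hΓ () u (by rw [hm, LinearMap.zero_apply])⟩

theorem heights_map_surjective [FiniteDimensional k X.V] (hT : IsNilpotent X.T) :
    Function.Surjective ((heights k).map : (X ⟶ Y) → _) := by
  intro φ
  obtain ⟨G, hG, hφ⟩ := exists_quotient_lift hT φ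
  obtain ⟨g, hg, hgG⟩ := exists_lift hT φ hG hφ
  have hU (u) (hu : u ∈ X.U) : g u ∈ Y.U := by
    rw [← Submodule.Quotient.mk_eq_zero, ← Submodule.mkQ_apply, hgG, Submodule.mkQ_apply,
      (Submodule.Quotient.mk_eq_zero X.U).2 hu, map_zero]
  let f : X ⟶ Y := ⟨g, hg, hU⟩
  refine ⟨f, PreprojectiveRep.Hom.ext (funext fun i =>
    Subquotient.map_eq_of_mem_rel (Hom.inner_le f i) ?_)⟩
  rintro _ ⟨hu, y, rfl⟩
  change (_, g _) ∈ _
  rw [map_pow_apply_of_comm hg]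
  exact hφ i y (g y) hu (hgG y)

end Full

theorem outer_eq_bot {X : InvariantPair k} {N i : ℕ} (hT : X.T ^ N = 0) (hi : N ≤ i) :
    X.outer i = ⊥ := by
  rw [outer, pow_eq_zero_of_le hi hT, range_zero, inf_bot_eq]

theorem isTypeA_heights {X : InvariantPair k} [FiniteDimensional k X.V] (hT : X.T ^ 5 = 0)
    (h : ∃ i, ¬ X.outer i ≤ X.inner i) : PreprojectiveRep.IsTypeA ((heights k).obj X) where
  finiteDimensional i := inferInstanceAs (FiniteDimensional k (Subquotient (X.outer i) _))
  exists_nontrivial := by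
    obtain ⟨i, hi⟩ := h
    exact ⟨i, not_subsingleton_iff_nontrivial.1 (hi ∘ Subquotient.subsingleton_iff.1)⟩
  zero := Subquotient.subsingleton_iff.2 fun u hu => ⟨u, hu.1, rfl⟩
  ge i hi := Subquotient.subsingleton_iff.2 ((outer_eq_bot hT hi).trans_le bot_le)

theorem exists_free_generator {V : Type u} [AddCommGroup V] [Module k V] {T : Module.End k V}
    {W : Submodule k V} {N : ℕ} (hT : T ^ N = 0) (hTW : W ∈ T.invtSubmodule) (hW : W ≠ ⊥)
    (hpure : ∀ i, W ⊓ range (T ^ i) ≤ W.map (T ^ i)) :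
    ∃ n < N, ∃ x ∈ W, (T ^ (n + 1)) x = 0 ∧ (T ^ n) x ∉ range (T ^ (n + 1)) := by
  have hbot : ker T ⊓ W ≠ ⊥ := by
    intro h
    obtain ⟨w, hw, hw0⟩ := W.ne_bot_iff.1 hW
    have hker (j) : (T ^ j) w ∈ W ∧ (T ^ j) w ≠ 0 := by
      induction j with
      | zero => exact ⟨hw, hw0⟩
      | succ j ih =>
        rw [pow_succ', Module.End.mul_apply]
        exact ⟨hTW ih.1, fun hj => ih.2 ((Submodule.eq_bot_iff _).1 h _ ⟨hj, ih.1⟩)⟩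
    exact (hker N).2 (by rw [hT, LinearMap.zero_apply])
  have hex : ∃ m, ker T ⊓ W ⊓ range (T ^ m) = ⊥ := ⟨N, by rw [hT, range_zero, inf_bot_eq]⟩
  classical
  obtain ⟨n, hn⟩ : ∃ n, Nat.find hex = n + 1 := Nat.exists_eq_succ_of_ne_zero fun h0 => by
    have h := Nat.find_spec hex
    rw [h0, pow_zero, Module.End.one_eq_id, range_id, inf_top_eq] at h
    exact hbot h
  have hsucc : ker T ⊓ W ⊓ range (T ^ (n + 1)) = ⊥ := hn ▸ Nat.find_spec hex
  obtain ⟨z, ⟨⟨hTz, hzW⟩, hz⟩, hz0⟩ :=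
    (Submodule.ne_bot_iff _).1 (Nat.find_min hex (hn.symm ▸ n.lt_succ_self : n < Nat.find hex))
  obtain ⟨x, hx, rfl⟩ := hpure n ⟨hzW, hz⟩
  refine ⟨n, ?_, x, hx, by rw [pow_succ']; exact hTz, fun h => hz0 ?_⟩
  · exact hn.ge.trans (Nat.find_min' hex (by rw [hT, range_zero, inf_bot_eq]))
  · exact (Submodule.eq_bot_iff _).1 hsucc _ ⟨⟨hTz, hzW⟩, h⟩

theorem exists_hom_of_free {X Y : InvariantPair k} {n : ℕ} {x : X.V} {y : Y.V}
    (hx : (X.T ^ (n + 1)) x = 0) (hx' : (X.T ^ n) x ∉ range (X.T ^ (n + 1)))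
    (hy : (Y.T ^ (n + 1)) y = 0) (hU : y ∈ Y.U ∨ X.U = ⊥) :
    ∃ f : Hom X Y, f.toLin ((X.T ^ n) x) = (Y.T ^ n) y := by
  obtain ⟨l, hlx, hl⟩ := Submodule.exists_le_ker_of_notMem hx'
  let l' := (l ((X.T ^ n) x))⁻¹ • l
  have hl' (u) : l' ((X.T ^ (n + 1)) u) = 0 :=
    mul_eq_zero_of_right _ (hl ⟨u, rfl⟩)
  refine ⟨⟨frobenius n l' X.T Y.T y, frobenius_comm hl' hy, fun u hu => ?_⟩, ?_⟩
  · rcases hU with hyU | hXU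
    · rw [frobenius_apply]
      exact Submodule.sum_mem _ fun j _ => Y.U.smul_mem _ (Y.pow_T_mem j y hyU)
    · rw [(Submodule.eq_bot_iff _).1 hXU u hu, map_zero]
      exact Y.U.zero_mem
  · have h1 : l' ((X.T ^ n) x) = 1 := inv_mul_cancel₀ hlx
    exact (frobenius_pow hx).trans (by rw [h1, one_smul])

theorem linked_of_free {X Y : InvariantPair k} {n : ℕ} {x : X.V} {y : Y.V}
    (hx : (X.T ^ (n + 1)) x = 0) (hx' : (X.T ^ n) x ∉ range (X.T ^ (n + 1)))
    (hy : (Y.T ^ (n + 1)) y = 0) (hy' : (Y.T ^ n) y ∉ range (Y.T ^ (n + 1)))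
    (hXY : y ∈ Y.U ∨ X.U = ⊥) (hYX : x ∈ X.U ∨ Y.U = ⊥) : Linked X Y := by
  obtain ⟨f, hf⟩ := exists_hom_of_free hx hx' hy hXY
  obtain ⟨g, hg⟩ := exists_hom_of_free hy hy' hx hYX
  exact Linked.of_fixed (forget k) f g (x := (X.T ^ n) x)
    (fun h => hx' (h ▸ Submodule.zero_mem _)) ((congrArg g.toLin hf).trans hg)

theorem finitelyLinked_pure (k : Type v) [Field k] (N : ℕ) :
    FinitelyLinked fun X : InvariantPair k =>
      Nontrivial X.V ∧ X.T ^ N = 0 ∧ ∀ i, X.outer i ≤ X.inner i := by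
  refine ⟨Fin N × Bool, inferInstance, fun (n, b) X => ∃ x, (X.T ^ (n.1 + 1)) x = 0 ∧
    (X.T ^ n.1) x ∉ range (X.T ^ (n.1 + 1)) ∧ bif b then x ∈ X.U else X.U = ⊥, ?_, ?_⟩
  · rintro X ⟨_, hT, hpure⟩
    by_cases hU : X.U = ⊥
    · obtain ⟨n, hn, x, -, hx⟩ := exists_free_generator hT (W := ⊤) (fun _ _ => trivial)
        top_ne_bot fun i => by rw [top_inf_eq, Submodule.map_top]
      exact ⟨(⟨n, hn⟩, false), x, hx.1, hx.2, hU⟩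
    · obtain ⟨n, hn, x, hxU, hx⟩ := exists_free_generator hT X.U_mem hU hpure
      exact ⟨(⟨n, hn⟩, true), x, hx.1, hx.2, hxU⟩
  · rintro ⟨n, b⟩ X Y ⟨x, hx, hx', hxU⟩ ⟨y, hy, hy', hyU⟩
    cases b
    · exact linked_of_free hx hx' hy hy' (.inr hxU) (.inr hyU)
    · exact linked_of_free hx hx' hy hy' (.inl hyU) (.inl hxU)

theorem finitelyLinked (k : Type v) [Field k] : FinitelyLinked fun X : InvariantPair k =>
    Nontrivial X.V ∧ FiniteDimensional k X.V ∧ X.T ^ 5 = 0 := by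
  have himpure : FinitelyLinked fun X : InvariantPair k => FiniteDimensional k X.V ∧
      X.T ^ 5 = 0 ∧ ∃ i, ¬ X.outer i ≤ X.inner i :=
    (PreprojectiveRep.finitelyLinked_isTypeA k).of_full (heights k)
      (fun X Y hX _ => have := hX.1; heights_map_surjective ⟨5, hX.2.1⟩)
      fun X hX => have := hX.1; isTypeA_heights hX.2.1 hX.2.2
  refine ((finitelyLinked_pure k 5).or himpure).mono fun X ⟨hX, hfin, hT⟩ => ?_
  by_cases h : ∀ i, X.outer i ≤ X.inner i
  exacts [.inl ⟨hX, hT, h⟩, .inr ⟨hfin, hT, not_forall.1 h⟩]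

end InvariantPair

section Fitting

theorem nonempty_iso_arrowBiprod {C : Type*} [Category C] [Preadditive C] [HasBinaryBiproducts C]
    {X Y Z : Arrow C} (i : Y ⟶ X) (j : Z ⟶ X) (hl : IsIso (biprod.desc i.left j.left))
    (hr : IsIso (biprod.desc i.right j.right)) : Nonempty (X ≅ arrowBiprod Y Z) :=
  let l : Y.left ⊞ Z.left ≅ X.left := asIso (biprod.desc i.left j.left)
  let r : Y.right ⊞ Z.right ≅ X.right := asIso (biprod.desc i.right j.right)
  have hw : biprod.desc i.left j.left ≫ X.hom =
      biprod.map Y.hom Z.hom ≫ biprod.desc i.right j.right := by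
    apply biprod.hom_ext' <;> simp
  ⟨(Arrow.isoMk l r hw).symm⟩

theorem nonempty_arrowBiprod_iso {C : Type*} [Category C] [Preadditive C] [HasBinaryBiproducts C]
    {Y Z Y' Z' : Arrow C} (e : Y ≅ Y') (f : Z ≅ Z') :
    Nonempty (arrowBiprod Y Z ≅ arrowBiprod Y' Z') :=
  have hw : biprod.map e.hom.left f.hom.left ≫ biprod.map Y'.hom Z'.hom =
      biprod.map Y.hom Z.hom ≫ biprod.map e.hom.right f.hom.right := by
    apply biprod.hom_ext <;> simp
  ⟨Arrow.isoMk (biprod.mapIso (Arrow.leftFunc.mapIso e) (Arrow.leftFunc.mapIso f))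
    (biprod.mapIso (Arrow.rightFunc.mapIso e) (Arrow.rightFunc.mapIso f)) hw⟩

section Ring

variable {R : Type*} [Ring R]

theorem isIso_biprod_desc_of_isCompl {M : ModuleCat.{u} R} {S T : Submodule R M}
    (h : IsCompl S T) :
    IsIso (biprod.desc (ModuleCat.ofHom S.subtype) (ModuleCat.ofHom T.subtype)) := by
  have hdesc : (ModuleCat.biprodIsoProd _ _).inv ≫
      biprod.desc (ModuleCat.ofHom S.subtype) (ModuleCat.ofHom T.subtype) =
        (S.prodEquivOfIsCompl T h).toModuleIso.hom := by
    rw [biprod.desc_eq, Preadditive.comp_add, ← Category.assoc, ← Category.assoc,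
      ModuleCat.biprodIsoProd_inv_comp_fst, ModuleCat.biprodIsoProd_inv_comp_snd]
    rfl
  rw [(Iso.inv_comp_eq _).1 hdesc]
  infer_instance

theorem isIso_of_isCompl_ker_range {M : ModuleCat.{u} R} {φ : M ⟶ M}
    (h : IsCompl (LinearMap.ker φ.hom) (LinearMap.range φ.hom))
    (hker : Subsingleton (LinearMap.ker φ.hom)) : IsIso φ := by
  rw [Submodule.subsingleton_iff_eq_bot] at hker
  rw [hker] at h
  exact (ConcreteCategory.isIso_iff_bijective φ).2
    ⟨LinearMap.ker_eq_bot.1 hker, LinearMap.range_eq_top.1 (eq_top_of_bot_isCompl h)⟩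

theorem isZero_arrow_iff {X : Arrow (ModuleCat.{u} R)} :
    IsZero X ↔ Subsingleton X.left ∧ Subsingleton X.right := by
  rw [← ModuleCat.isZero_iff_subsingleton, ← ModuleCat.isZero_iff_subsingleton,
    IsZero.iff_id_eq_zero, IsZero.iff_id_eq_zero, IsZero.iff_id_eq_zero]
  exact ⟨fun h => ⟨congrArg CommaMorphism.left h, congrArg CommaMorphism.right h⟩,
    fun h => Arrow.hom_ext _ _ h.1 h.2⟩

theorem isZero_iff_of_mono {X : Arrow (ModuleCat.{u} R)} (hX : Mono X.hom) :
    IsZero X ↔ Subsingleton X.right := by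
  rw [isZero_arrow_iff, and_iff_right_of_imp]
  exact fun _ => ((ModuleCat.mono_iff_injective _).1 hX).subsingleton

/-- The arrow `S ⟶ S'` induced by `X` on submodules of its source and target. -/
def restrictArrow (X : Arrow (ModuleCat.{u} R)) {S : Submodule R X.left} {S' : Submodule R X.right}
    (h : S ≤ S'.comap X.hom.hom) : Arrow (ModuleCat.{u} R) :=
  Arrow.mk (ModuleCat.ofHom (X.hom.hom.restrict h))

theorem nonempty_iso_arrowBiprod_restrictArrow {X : Arrow (ModuleCat.{u} R)}
    {S T : Submodule R X.left} {S' T' : Submodule R X.right} (hS : S ≤ S'.comap X.hom.hom)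
    (hT : T ≤ T'.comap X.hom.hom) (hST : IsCompl S T) (hST' : IsCompl S' T') :
    Nonempty (X ≅ arrowBiprod (restrictArrow X hS) (restrictArrow X hT)) :=
  nonempty_iso_arrowBiprod (Y := restrictArrow X hS) (Z := restrictArrow X hT)
    (Arrow.homMk (u := ModuleCat.ofHom S.subtype) (v := ModuleCat.ofHom S'.subtype) rfl)
    (Arrow.homMk (u := ModuleCat.ofHom T.subtype) (v := ModuleCat.ofHom T'.subtype) rfl)
    (isIso_biprod_desc_of_isCompl hST) (isIso_biprod_desc_of_isCompl hST')

theorem left_pow {X : Arrow (ModuleCat.{u} R)} (f : End X) (n : ℕ) :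
    (f ^ n).asHom.left.hom = f.asHom.left.hom ^ n := by
  induction n with
  | zero => rfl
  | succ n ih => rw [pow_succ, pow_succ, ← ih]; rfl

theorem right_pow {X : Arrow (ModuleCat.{u} R)} (f : End X) (n : ℕ) :
    (f ^ n).asHom.right.hom = f.asHom.right.hom ^ n := by
  induction n with
  | zero => rfl
  | succ n ih => rw [pow_succ, pow_succ, ← ih]; rfl

end Ring

variable {Λ : Type} [CommRing Λ]

theorem sModObj'_restrictArrow [IsNoetherianRing Λ] {X : Arrow (ModuleCat.{u} Λ)}
    (hX : SModObj' Λ X) {S : Submodule Λ X.left} {S' : Submodule Λ X.right}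
    (h : S ≤ S'.comap X.hom.hom) : SModObj' Λ (restrictArrow X h) := by
  obtain ⟨_, _, hmono⟩ := hX
  have hinj : Function.Injective X.hom.hom := (ModuleCat.mono_iff_injective _).1 hmono
  exact ⟨inferInstanceAs (Module.Finite Λ S), inferInstanceAs (Module.Finite Λ S'),
    (ModuleCat.mono_iff_injective _).2 fun a b hab =>
      Subtype.ext (hinj (congrArg Subtype.val hab))⟩

theorem isNilpotent_or_isUnit [IsArtinianRing Λ] {X : Arrow (ModuleCat.{u} Λ)}
    (hX : SModObj' Λ X) (hi : IndecArrowIn (SModObj' Λ) X) (f : End X) :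
    IsNilpotent f ∨ IsUnit f := by
  have : Module.Finite Λ X.left := hX.1
  have : Module.Finite Λ X.right := hX.2.1
  obtain ⟨n, ⟨hl, hr⟩, hn⟩ :=
    (((f.asHom.left.hom.eventually_isCompl_ker_pow_range_pow).and
      f.asHom.right.hom.eventually_isCompl_ker_pow_range_pow).and
        (Filter.eventually_gt_atTop 0)).exists
  rw [← left_pow] at hl
  rw [← right_pow] at hr
  set g := (f ^ n).asHom
  have hcomm : ∀ u, X.hom.hom (g.left.hom u) = g.right.hom (X.hom.hom u) := fun u =>
    (congrArg (fun h => h.hom u) g.w)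
  have hker : LinearMap.ker g.left.hom ≤ (LinearMap.ker g.right.hom).comap X.hom.hom :=
    fun u hu => (hcomm u).symm.trans (by rw [LinearMap.mem_ker.1 hu, map_zero])
  have hrange : LinearMap.range g.left.hom ≤ (LinearMap.range g.right.hom).comap X.hom.hom := by
    rintro _ ⟨u, rfl⟩
    exact ⟨X.hom.hom u, (hcomm u).symm⟩
  rcases hi.2 _ _ (sModObj'_restrictArrow hX hker) (sModObj'_restrictArrow hX hrange)
    (nonempty_iso_arrowBiprod_restrictArrow hker hrange hl hr) with h0 | h0 <;>
    obtain ⟨hl0, hr0⟩ := isZero_arrow_iff.1 h0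
  · right
    have := isIso_of_isCompl_ker_range hl hl0
    have := isIso_of_isCompl_ker_range hr hr0
    have : IsIso g := Arrow.isIso_of_isIso_left_of_isIso_right g
    exact (isUnit_pow_iff hn.ne').1 ((isUnit_iff_isIso (f ^ n)).2 this)
  · left
    refine ⟨n, Arrow.hom_ext _ _ (ModuleCat.hom_ext ?_) (ModuleCat.hom_ext ?_)⟩
    · exact LinearMap.range_eq_bot.1 ((Submodule.subsingleton_iff_eq_bot).1 hl0)
    · exact LinearMap.range_eq_bot.1 ((Submodule.subsingleton_iff_eq_bot).1 hr0)

theorem Linked.nonempty_iso {C : Type*} [Category C] [Preadditive C] {X Y : C} (h : Linked X Y)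
    (hX : ∀ f : End X, IsNilpotent f ∨ IsUnit f) (hY : ∀ f : End Y, IsNilpotent f ∨ IsUnit f) :
    Nonempty (X ≅ Y) := by
  obtain ⟨f, g, hfg⟩ := h
  have hpow : ∀ n, (End.of (f ≫ g) ^ (n + 1)).asHom = f ≫ (End.of (g ≫ f) ^ n).asHom ≫ g := by
    intro n
    induction n with
    | zero => exact (Category.comp_id _).trans (congrArg (f ≫ ·) (Category.id_comp g).symm)
    | succ n ih =>
      rw [pow_succ]
      change (f ≫ g) ≫ (End.of (f ≫ g) ^ (n + 1)).asHom = _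
      rw [ih, pow_succ]
      change _ = f ≫ ((g ≫ f) ≫ (End.of (g ≫ f) ^ n).asHom) ≫ g
      simp only [Category.assoc]
  have hfg' : IsIso (f ≫ g) := (isUnit_iff_isIso _).1 <| (hX (End.of (f ≫ g))).resolve_left
    fun ⟨n, hn⟩ => hfg n hn
  have hgf' : IsIso (g ≫ f) := (isUnit_iff_isIso _).1 <| (hY (End.of (g ≫ f))).resolve_left
    fun ⟨n, hn⟩ => hfg (n + 1) <| by
      rw [hpow, show (End.of (g ≫ f) ^ n).asHom = 0 from hn, zero_comp, comp_zero]
  have : Mono f := mono_of_mono f g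
  have : IsSplitEpi f := ⟨⟨inv (g ≫ f) ≫ g, by rw [Category.assoc, IsIso.inv_hom_id]⟩⟩
  have : IsIso f := isIso_of_mono_of_isSplitEpi f
  exact ⟨asIso f⟩

theorem frtArrow_of_finitelyLinked [IsArtinianRing Λ]
    (h : FinitelyLinked fun X : Arrow (ModuleCat.{u} Λ) => SModObj' Λ X ∧ ¬ IsZero X) :
    FRTArrow (SModObj'.{u} Λ) := by
  obtain ⟨τ, _, R, hR, hlink⟩ := h
  classical
  let P : τ → Arrow (ModuleCat.{u} Λ) → Prop := fun t X =>
    SModObj' Λ X ∧ IndecArrowIn (SModObj' Λ) X ∧ R t X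
  refine ⟨Set.range fun t : {t // ∃ X, P t X} => t.2.choose, Set.finite_range _, fun X hX hi => ?_⟩
  obtain ⟨t, ht⟩ := hR X ⟨hX, hi.1⟩
  have hex : ∃ Y, P t Y := ⟨X, hX, hi, ht⟩
  obtain ⟨hY, hYi, hYt⟩ := hex.choose_spec
  exact ⟨_, ⟨⟨t, hex⟩, rfl⟩, (hlink t _ _ ht hYt).nonempty_iso (isNilpotent_or_isUnit hX hi)
    (isNilpotent_or_isUnit hY hYi)⟩

end Fitting

section OfArrow

open scoped ModuleCat

variable {K : Type v} [Field K]

theorem exists_restrictScalars_eq {Λ M N : Type*} [CommRing Λ] [Algebra K Λ] [AddCommGroup M]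
    [AddCommGroup N] [Module K M] [Module K N] [Module Λ M] [Module Λ N] [IsScalarTower K Λ M]
    [IsScalarTower K Λ N] {x : Λ} (hx : Algebra.adjoin K {x} = ⊤) (f : M →ₗ[K] N)
    (hf : ∀ u, f (x • u) = x • f u) : ∃ g : M →ₗ[Λ] N, g.restrictScalars K = f := by
  have hsmul : ∀ (r : Λ) u, f (r • u) = r • f u := fun r => by
    induction hx.symm ▸ Algebra.mem_top (x := r) using Algebra.adjoin_induction with
    | mem y hy => rwa [Set.mem_singleton_iff.1 hy]
    | algebraMap c => exact fun u => by rw [algebraMap_smul, algebraMap_smul, map_smul]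
    | add a b _ _ ha hb => exact fun u => by rw [add_smul, add_smul, map_add, ha, hb]
    | mul a b _ _ ha hb => exact fun u => by rw [mul_smul, mul_smul, ha, hb]
  exact ⟨{ f with map_smul' := hsmul }, rfl⟩

/-- The functor sending an arrow of modules over a `K`-algebra to its target, with the operator
given by multiplication by `x`, and its image. -/
def ofArrow (K : Type v) [Field K] {Λ : Type*} [CommRing Λ] [Algebra K Λ] (x : Λ) :
    Arrow (ModuleCat.{u} Λ) ⥤ InvariantPair.{u, v} K where
  obj X :=
    { V := X.right
      T := Algebra.lsmul K K X.right x
      U := (LinearMap.range X.hom.hom).restrictScalars K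
      U_mem := fun _ hu => (LinearMap.range X.hom.hom).smul_mem x hu }
  map {X Y} f :=
    { toLin := f.right.hom.restrictScalars K
      map_T := f.right.hom.map_smul x
      map_mem := by
        rintro _ ⟨u, rfl⟩
        exact ⟨f.left.hom u, congrArg (fun h => h.hom u) f.w⟩ }

instance {Λ : Type*} [CommRing Λ] [Algebra K Λ] (x : Λ) :
    (ofArrow.{u} K x).PreservesZeroMorphisms := ⟨fun _ _ => rfl⟩

theorem ofArrow_map_surjective {Λ : Type*} [CommRing Λ] [Algebra K Λ] {x : Λ}
    (hx : Algebra.adjoin K {x} = ⊤) {X Y : Arrow (ModuleCat.{u} Λ)} (hY : Mono Y.hom) :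
    Function.Surjective ((ofArrow K x).map : (X ⟶ Y) → _) := by
  intro φ
  let f : X.right →ₗ[K] Y.right := φ.toLin
  obtain ⟨g, hg⟩ := exists_restrictScalars_eq hx f φ.map_T
  have hmem : ∀ u, g (X.hom.hom u) ∈ LinearMap.range Y.hom.hom := fun u =>
    (LinearMap.congr_fun hg _) ▸ φ.map_mem _ ⟨u, rfl⟩
  let e := LinearEquiv.ofInjective Y.hom.hom ((ModuleCat.mono_iff_injective _).1 hY)
  let l : X.left →ₗ[Λ] Y.left := e.symm ∘ₗ (g ∘ₗ X.hom.hom).codRestrict _ hmem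
  have hl : ∀ u, Y.hom.hom (l u) = g (X.hom.hom u) := fun u =>
    congrArg Subtype.val (e.apply_symm_apply ⟨_, hmem u⟩)
  exact ⟨Arrow.homMk (ModuleCat.ofHom l) (ModuleCat.ofHom g)
    (ModuleCat.hom_ext (LinearMap.ext hl)), InvariantPair.Hom.ext hg⟩

theorem frtArrow_of_pow_five_eq_zero {Λ : Type} [CommRing Λ] [Algebra K Λ] [Module.Finite K Λ]
    {x : Λ} (hx : Algebra.adjoin K {x} = ⊤) (h5 : x ^ 5 = 0) : FRTArrow (SModObj'.{u} Λ) := by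
  have : IsArtinianRing Λ := IsArtinianRing.of_finite K Λ
  refine frtArrow_of_finitelyLinked <| (InvariantPair.finitelyLinked K).of_full (ofArrow K x)
    (fun X Y _ hY => ofArrow_map_surjective hx hY.1.2.2) fun X ⟨⟨_, hfin, hmono⟩, hX⟩ => ?_
  have : Module.Finite Λ X.right := hfin
  refine ⟨not_subsingleton_iff_nontrivial.1 fun h => hX ((isZero_iff_of_mono hmono).2 h),
    Module.Finite.trans (R := K) Λ X.right, ?_⟩
  have hpow : Algebra.lsmul K K X.right x ^ 5 = 0 := by rw [← map_pow, h5, map_zero]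
  exact hpow

/-- The universe lift makes room for a target in any universe above that of `V`. -/
theorem exists_arrow_of_algHom {Λ : Type*} [CommRing Λ] [Algebra K Λ] {x : Λ}
    (hx : Algebra.adjoin K {x} = ⊤) {V : Type u} [AddCommGroup V] [Module K V]
    (ρ : Λ →ₐ[K] Module.End K V) {U : Submodule K V} (hU : U ∈ (ρ x).invtSubmodule) :
    ∃ (A : Arrow (ModuleCat.{max u w} Λ)) (e : V ≃ₗ[K] A.right), Mono A.hom ∧
      (∀ r u, e (ρ r u) = r • e u) ∧ ∀ u, e u ∈ LinearMap.range A.hom.hom ↔ u ∈ U := by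
  let _ : Module Λ V := Module.compHom V ρ.toRingHom
  have hmem : ∀ (r : Λ), ∀ u ∈ U, ρ r u ∈ U := fun r => by
    induction hx.symm ▸ Algebra.mem_top (x := r) using Algebra.adjoin_induction with
    | mem y hy => exact fun u hu => by rw [Set.mem_singleton_iff.1 hy]; exact hU hu
    | algebraMap c => exact fun u hu => by rw [ρ.commutes]; exact U.smul_mem c hu
    | add a b _ _ ha hb => exact fun u hu => by rw [map_add]; exact U.add_mem (ha u hu) (hb u hu)
    | mul a b _ _ ha hb => exact fun u hu => by rw [map_mul]; exact ha _ (hb u hu)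
  let W : Submodule Λ (ULift.{w} V) :=
    { carrier := {u | u.down ∈ U}
      zero_mem' := U.zero_mem
      add_mem' := U.add_mem
      smul_mem' := fun r u hu => hmem r u.down hu }
  let A : Arrow (ModuleCat.{max u w} Λ) := Arrow.mk (ModuleCat.ofHom W.subtype)
  let e : V ≃ₗ[K] A.right :=
    { Equiv.ulift.symm with
      map_add' := fun _ _ => rfl
      map_smul' := fun c u => congrArg ULift.up (LinearMap.congr_fun (ρ.commutes c) u).symm }
  refine ⟨A, e, (ModuleCat.mono_iff_injective _).2 W.subtype_injective, fun _ _ => rfl, fun u => ?_⟩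
  change (ULift.up u ∈ LinearMap.range W.subtype) ↔ _
  rw [W.range_subtype]
  rfl

end OfArrow

section BoundedLength

variable {Λ : Type} [CommRing Λ]

theorem length_right_of_iso_arrowBiprod {X Y Z : Arrow (ModuleCat.{u} Λ)}
    (e : X ≅ arrowBiprod Y Z) :
    Module.length Λ X.right = Module.length Λ Y.right + Module.length Λ Z.right := by
  let e' : X.right ≅ Y.right ⊞ Z.right := Arrow.rightFunc.mapIso e
  rw [(e' ≪≫ ModuleCat.biprodIsoProd Y.right Z.right).toLinearEquiv.length_eq]
  exact Module.length_prod ..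

theorem exists_lt_length_of_not_indecArrowIn {X : Arrow (ModuleCat.{u} Λ)}
    (h0 : ¬ IsZero X) (hi : ¬ IndecArrowIn (SModObj' Λ) X) {n : ℕ}
    (hn : Module.length Λ X.right ≤ (n + 1 : ℕ)) : ∃ Y Z, SModObj' Λ Y ∧ SModObj' Λ Z ∧
      Module.length Λ Y.right ≤ n ∧ Module.length Λ Z.right ≤ n ∧
        Nonempty (X ≅ arrowBiprod Y Z) := by
  simp only [IndecArrowIn, not_and, not_forall, not_or] at hi
  obtain ⟨Y, Z, hY, hZ, ⟨e⟩, hY0, hZ0⟩ := hi h0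
  rw [isZero_iff_of_mono hY.2.2, ← Module.length_eq_zero_iff (R := Λ)] at hY0
  rw [isZero_iff_of_mono hZ.2.2, ← Module.length_eq_zero_iff (R := Λ)] at hZ0
  rw [length_right_of_iso_arrowBiprod e] at hn
  generalize hp : Module.length Λ Y.right = p at hn hY0
  generalize hq : Module.length Λ Z.right = q at hn hZ0
  lift p to ℕ using (le_self_add.trans hn).trans_lt (ENat.natCast_lt_top _) |>.ne
  lift q to ℕ using (le_add_self.trans hn).trans_lt (ENat.natCast_lt_top _) |>.ne
  refine ⟨Y, Z, hY, hZ, hp.trans_le ?_, hq.trans_le ?_, ⟨e⟩⟩ <;> norm_cast at hn hY0 hZ0 ⊢ <;> omega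

theorem exists_finite_classes_of_frtArrow (h : FRTArrow (SModObj'.{u} Λ)) (n : ℕ) :
    ∃ s : Set (Arrow (ModuleCat.{u} Λ)), s.Finite ∧ ∀ X, SModObj' Λ X →
      Module.length Λ X.right ≤ n → ∃ Y ∈ s, Nonempty (X ≅ Y) := by
  obtain ⟨s, hs, hs'⟩ := h
  let Z₀ : Arrow (ModuleCat.{u} Λ) := Arrow.mk (𝟙 (ModuleCat.of Λ PUnit))
  have h0 : IsZero Z₀ := isZero_arrow_iff.2
    ⟨inferInstanceAs (Subsingleton PUnit), inferInstanceAs (Subsingleton PUnit)⟩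
  induction n with
  | zero =>
    refine ⟨{Z₀}, Set.finite_singleton _, fun X hX hl => ⟨Z₀, rfl, ?_⟩⟩
    have hX0 : IsZero X := (isZero_iff_of_mono hX.2.2).2 <|
      Module.length_eq_zero_iff.1 (nonpos_iff_eq_zero.1 hl)
    exact ⟨hX0.iso h0⟩
  | succ n ih =>
    obtain ⟨S, hS, hS'⟩ := ih
    refine ⟨s ∪ {Z₀} ∪ Set.image2 arrowBiprod S S,
      (hs.union (Set.finite_singleton _)).union (hS.image2 _ hS), fun X hX hl => ?_⟩
    by_cases hX0 : IsZero X
    · exact ⟨Z₀, .inl (.inr rfl), ⟨hX0.iso h0⟩⟩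
    by_cases hi : IndecArrowIn (SModObj' Λ) X
    · obtain ⟨Y, hY, e⟩ := hs' X hX hi
      exact ⟨Y, .inl (.inl hY), e⟩
    obtain ⟨Y, Z, hY, hZ, hYn, hZn, ⟨e⟩⟩ := exists_lt_length_of_not_indecArrowIn hX0 hi hl
    obtain ⟨Y', hY', ⟨eY⟩⟩ := hS' Y hY hYn
    obtain ⟨Z', hZ', ⟨eZ⟩⟩ := hS' Z hZ hZn
    obtain ⟨e'⟩ := nonempty_arrowBiprod_iso eY eZ
    exact ⟨_, .inr ⟨Y', hY', Z', hZ', rfl⟩, ⟨e ≪≫ e'⟩⟩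

end BoundedLength

section Family

variable {k : Type v} [Field k]

/-- Multiplication by `X` on `k[X]/(X⁶) ⊕ k[X]/(X⁴) ⊕ k[X]/(X²)`, where the coordinates `0`, `6`
and `10` belong to the three generators. -/
def shift (k : Type v) [Field k] : Module.End k (Fin 12 → k) where
  toFun u := ![0, u 0, u 1, u 2, u 3, u 4, 0, u 6, u 7, u 8, 0, u 10]
  map_add' u w := by ext i; fin_cases i <;> simp
  map_smul' c u := by ext i; fin_cases i <;> simp

theorem shift_apply (u : Fin 12 → k) :
    shift k u = ![0, u 0, u 1, u 2, u 3, u 4, 0, u 6, u 7, u 8, 0, u 10] := rfl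

theorem shift_pow_two_apply (u : Fin 12 → k) :
    (shift k ^ 2) u = ![0, 0, u 0, u 1, u 2, u 3, 0, 0, u 6, u 7, 0, 0] := by
  ext i; fin_cases i <;> rfl

theorem shift_pow_four_apply (u : Fin 12 → k) :
    (shift k ^ 4) u = ![0, 0, 0, 0, u 0, u 1, 0, 0, 0, 0, 0, 0] := by
  ext i; fin_cases i <;> rfl

theorem shift_pow_five_apply (u : Fin 12 → k) :
    (shift k ^ 5) u = ![0, 0, 0, 0, 0, u 0, 0, 0, 0, 0, 0, 0] := by
  ext i; fin_cases i <;> rfl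

theorem shift_pow_six : shift k ^ 6 = 0 := by
  refine LinearMap.ext fun u => funext fun i => ?_
  fin_cases i <;> rfl

/-- The submodule of `k[X]/(X⁶) ⊕ k[X]/(X⁴) ⊕ k[X]/(X²)`, with generators `x`, `y` and `z`,
generated by `X²x + Xy + z` and `X²y + c • Xz`. -/
def familySubmodule (c : k) : Submodule k (Fin 12 → k) where
  carrier := {u | u 0 = 0 ∧ u 1 = 0 ∧ u 6 = 0 ∧ u 2 = u 10 ∧ u 7 = u 10 ∧
    u 11 = u 3 + c * (u 8 - u 3)}
  zero_mem' := by simp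
  add_mem' := by
    rintro u w ⟨h1, h2, h3, h4, h5, h6⟩ ⟨g1, g2, g3, g4, g5, g6⟩
    refine ⟨?_, ?_, ?_, ?_, ?_, ?_⟩ <;> simp only [Pi.add_apply, *] <;> ring
  smul_mem' := by
    rintro r u ⟨h1, h2, h3, h4, h5, h6⟩
    refine ⟨?_, ?_, ?_, ?_, ?_, ?_⟩ <;> simp only [Pi.smul_apply, smul_eq_mul, *] <;> ring

theorem mem_familySubmodule {c : k} {u : Fin 12 → k} : u ∈ familySubmodule c ↔
    u 0 = 0 ∧ u 1 = 0 ∧ u 6 = 0 ∧ u 2 = u 10 ∧ u 7 = u 10 ∧ u 11 = u 3 + c * (u 8 - u 3) :=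
  Iff.rfl

theorem familySubmodule_mem_invtSubmodule (c : k) :
    familySubmodule c ∈ (shift k).invtSubmodule := by
  rintro u ⟨h0, h1, h6, h2, h7, -⟩
  refine ⟨rfl, h0, rfl, h1, h6, ?_⟩
  change u 10 = u 2 + c * (u 7 - u 2)
  rw [h2, h7, sub_self, mul_zero, add_zero]

theorem map_single_apply_zero_ne_zero {g : (Fin 12 → k) →ₗ[k] (Fin 12 → k)}
    (hg : Function.Injective g) (hT : ∀ u, g (shift k u) = shift k (g u)) :
    g (Pi.single 0 1) 0 ≠ 0 := by
  intro h0
  have h5 : g ((shift k ^ 5) (Pi.single 0 1)) = 0 := by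
    rw [map_pow_apply_of_comm hT, shift_pow_five_apply, h0]
    simp
  have := congrFun ((map_eq_zero_iff g hg).1 h5) 5
  simp [shift_pow_five_apply] at this

/-- The images of the three generators under `g` have the same leading coefficient `a`, and the
generator `X²y + c • Xz` then forces `c * a = d * a`. -/
theorem eq_of_injective_of_map_mem {c d : k} {g : (Fin 12 → k) →ₗ[k] (Fin 12 → k)}
    (hg : Function.Injective g) (hT : ∀ u, g (shift k u) = shift k (g u))
    (hU : ∀ u ∈ familySubmodule c, g u ∈ familySubmodule d) : c = d := by
  have hT' : ∀ n u, g ((shift k ^ n) u) = (shift k ^ n) (g u) := map_pow_apply_of_comm hT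
  set x : Fin 12 → k := Pi.single 0 1
  set y : Fin 12 → k := Pi.single 6 1
  set z : Fin 12 → k := Pi.single 10 1
  have hy : (shift k ^ 4) (g y) = 0 := by
    rw [← hT', show (shift k ^ 4) y = 0 by simp [shift_pow_four_apply, y], map_zero]
  have hz : (shift k ^ 2) (g z) = 0 := by
    rw [← hT', show (shift k ^ 2) z = 0 by simp [shift_pow_two_apply, z], map_zero]
  rw [shift_pow_four_apply] at hy
  rw [shift_pow_two_apply] at hz
  have hy1 : g y 1 = 0 := congrFun hy 5
  have hz2 : g z 2 = 0 := congrFun hz 4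
  have hz7 : g z 7 = 0 := congrFun hz 9
  have hU₁ : (shift k ^ 2) (g x) + shift k (g y) + g z ∈ familySubmodule d := by
    rw [← hT', ← hT, ← map_add, ← map_add]
    exact hU _ <| by simp [mem_familySubmodule, Pi.add_apply, x, y, z, shift_pow_two_apply,
      shift_apply, -Matrix.cons_add, -Matrix.add_cons]
  have hU₂ : (shift k ^ 2) (g y) + c • shift k (g z) ∈ familySubmodule d := by
    rw [← hT', ← hT, ← map_smul, ← map_add]
    exact hU _ (by simp [mem_familySubmodule, y, z, shift_pow_two_apply, shift_apply])
  have hxz : g x 0 = g z 10 := by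
    simpa [shift_pow_two_apply, shift_apply, hy1, hz2, -Matrix.cons_add, -Matrix.add_cons]
      using hU₁.2.2.2.1
  have hyz : g y 6 = g z 10 := by
    simpa [shift_pow_two_apply, shift_apply, hz7, -Matrix.cons_add, -Matrix.add_cons]
      using hU₁.2.2.2.2.1
  have hcd : c * g z 10 = d * g y 6 := by
    simpa [shift_pow_two_apply, shift_apply, hy1, hz2, hz7] using hU₂.2.2.2.2.2
  rw [hyz] at hcd
  exact mul_right_cancel₀ (hxz ▸ map_single_apply_zero_ne_zero hg hT) hcd

end Family

section InfiniteType

open scoped ModuleCat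

variable {k : Type v} [Field k] {Λ : Type} [CommRing Λ] [Algebra k Λ]

theorem sModObj'_of_finite [IsNoetherianRing Λ] {X : Arrow (ModuleCat.{u} Λ)}
    [Module.Finite k X.right] (hX : Mono X.hom) :
    SModObj' Λ X := by
  have : Module.Finite Λ X.right := Module.Finite.of_restrictScalars_finite k Λ X.right
  exact ⟨Module.Finite.of_injective X.hom.hom ((ModuleCat.mono_iff_injective _).1 hX), this, hX⟩

theorem length_le_finrank (M : Type*) [AddCommGroup M] [Module k M] [Module Λ M]
    [IsScalarTower k Λ M] [Module.Finite k M] : Module.length Λ M ≤ Module.finrank k M := by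
  have h := Submodule.length_le_length_restrictScalars k (⊤ : Submodule Λ M)
  rw [Submodule.restrictScalars_top, Module.length_top, Module.length_top] at h
  exact h.trans_eq (Module.length_eq_finrank k M)

theorem exists_family [IsNoetherianRing Λ] {x : Λ} (hx : Algebra.adjoin k {x} = ⊤)
    {ρ : Λ →ₐ[k] Module.End k (Fin 12 → k)} (hρ : ρ x = shift k) :
    ∃ A : k → Arrow (ModuleCat.{max v w} Λ),
      (∀ c, SModObj' Λ (A c) ∧ Module.length Λ (A c).right ≤ 12) ∧
        ∀ c d, Nonempty (A c ≅ A d) → c = d := by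
  choose A e hmono hρe hmem using fun c : k => exists_arrow_of_algHom.{v, v, w} hx ρ
    (hρ ▸ familySubmodule_mem_invtSubmodule c)
  have heT : ∀ c u, e c (shift k u) = x • e c u := fun c => hρ ▸ hρe c x
  refine ⟨A, fun c => ?_, fun c d ⟨i⟩ => ?_⟩
  · have : Module.Finite k (A c).right := Module.Finite.equiv (e c)
    have hrank : Module.finrank k (A c).right = 12 :=
      (e c).finrank_eq.symm.trans (Module.finrank_fin_fun k)
    exact ⟨sModObj'_of_finite (k := k) (hmono c),
      (length_le_finrank (k := k) (A c).right).trans_eq (congrArg Nat.cast hrank)⟩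
  · let l : (A c).left ≃ₗ[Λ] (A d).left := (Arrow.leftFunc.mapIso i).toLinearEquiv
    let r : (A c).right ≃ₗ[Λ] (A d).right := (Arrow.rightFunc.mapIso i).toLinearEquiv
    let g : (Fin 12 → k) ≃ₗ[k] (Fin 12 → k) := e c ≪≫ₗ r.restrictScalars k ≪≫ₗ (e d).symm
    have hg : ∀ u, e d (g u) = r (e c u) := fun u => (e d).apply_symm_apply _
    refine eq_of_injective_of_map_mem (g := g) g.injective (fun u => (e d).injective ?_)
      fun u hu => (hmem d _).1 ?_
    · calc e d (g (shift k u)) = x • r (e c u) := by rw [hg, heT, map_smul]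
        _ = e d (shift k (g u)) := by rw [heT, hg]
    · obtain ⟨w, hw⟩ := (hmem c u).2 hu
      exact ⟨l w, (congrArg (fun f => f.hom w) i.hom.w).trans ((congrArg r hw).trans (hg u).symm)⟩

theorem not_frtArrow_of_algHom [Infinite k] [IsNoetherianRing Λ] {x : Λ}
    (hx : Algebra.adjoin k {x} = ⊤)
    {ρ : Λ →ₐ[k] Module.End k (Fin 12 → k)} (hρ : ρ x = shift k) :
    ¬ FRTArrow (SModObj'.{max v w} Λ) := by
  intro h
  obtain ⟨A, hA, hinj⟩ := exists_family.{v, w} hx hρ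
  obtain ⟨s, hs, hs'⟩ := exists_finite_classes_of_frtArrow h 12
  choose Y hY e using fun c => hs' (A c) (hA c).1 (hA c).2
  obtain ⟨c, -, d, -, hcd, hYcd⟩ :=
    Set.infinite_univ.exists_ne_map_eq_of_mapsTo (fun c _ => hY c) hs
  obtain ⟨ec⟩ := e c
  obtain ⟨ed⟩ := e d
  exact hcd (hinj c d ⟨ec ≪≫ eqToIso hYcd ≪≫ ed.symm⟩)

end InfiniteType

section Quotient

open Polynomial

variable {k : Type v} [Field k]

theorem adjoin_quotient_mk_X (I : Ideal k[X]) :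
    Algebra.adjoin k {Ideal.Quotient.mk I X} = ⊤ := by
  have h := (Ideal.Quotient.mkₐ k I).map_adjoin_singleton X
  rw [adjoin_X, Algebra.map_top, (AlgHom.range_eq_top _).2 Ideal.Quotient.mk_surjective] at h
  exact h.symm

theorem exists_algHom_quotient_mk_X {A : Type*} [Ring A] [Algebra k A] {a : A} {t : ℕ}
    (ha : a ^ t = 0) : ∃ ρ : k[X] ⧸ Ideal.span {(X ^ t : k[X])} →ₐ[k] A,
      ρ (Ideal.Quotient.mk _ X) = a := by
  refine ⟨Ideal.Quotient.liftₐ _ (aeval a) fun p hp => ?_, aeval_X a⟩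
  obtain ⟨q, rfl⟩ := Ideal.mem_span_singleton.1 hp
  rw [map_mul, map_pow, aeval_X, ha, zero_mul]

end Quotient

end MonomorphismCategory

open MonomorphismCategory Polynomial in
theorem stmt19_general (k : Type) [Field k] [Infinite k] (t : ℕ) :
    FRTArrow (SModObj'
      (Polynomial k ⧸ (Ideal.span {Polynomial.X ^ t} : Ideal (Polynomial k)))) ↔
      t ≤ 5 := by
  have hx := adjoin_quotient_mk_X (Ideal.span {(X ^ t : k[X])})
  have : Module.Finite k (k[X] ⧸ Ideal.span {(X ^ t : k[X])}) := (monic_X_pow t).finite_quotient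
  have : IsNoetherianRing (k[X] ⧸ Ideal.span {(X ^ t : k[X])}) := inferInstance
  refine ⟨fun hfrt => ?_, fun ht => frtArrow_of_pow_five_eq_zero hx ?_⟩
  · by_contra! ht
    obtain ⟨ρ, hρ⟩ :=
      exists_algHom_quotient_mk_X (k := k) (pow_eq_zero_of_le ht (shift_pow_six (k := k)))
    exact not_frtArrow_of_algHom.{0} hx hρ hfrt
  · rw [← map_pow, Ideal.Quotient.eq_zero_iff_mem, Ideal.mem_span_singleton]
    exact pow_dvd_pow X ht

/-- Let `k` be an algebraically closed field of characteristic
different from `2` and `t ≥ 2`.  Then the monomorphism category `S(mod k[X]/(Xᵗ))` is of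
finite representation type if and only if `t ≤ 5`. -/
theorem stmt19 (k : Type) [Field k] [IsAlgClosed k] (h2 : (2 : k) ≠ 0)
    (t : ℕ) (ht : 2 ≤ t) :
    FRTArrow (SModObj'
      (Polynomial k ⧸ (Ideal.span {Polynomial.X ^ t} : Ideal (Polynomial k)))) ↔
      t ≤ 5 :=
  stmt19_general k t
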